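/- Let $a, b, c$ be integers with $\gcd(b, c) = 1$, both $b$ and $c$ odd, and $2b^5 - c^5 = a^2$. Then $b = c = 1$ (and hence $a = \pm 1$). -/

import Mathlib

open NumberField Module Polynomial

section NumberField

variable {K : Type*} [Field K] [NumberField K]

theorem charpoly_lmul_of_pow_five_eq (hK : finrank ℚ K = 5) {a : K} {n : ℚ} (ha : a ^ 5 = n)
    (hn : ∀ b : ℚ, b ^ 5 ≠ n) : (Algebra.lmul ℚ K a).charpoly = X ^ 5 - C n := by
  have hirr := X_pow_sub_C_irreducible_of_prime Nat.prime_five hn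
  have hmon : (X ^ 5 - C n : ℚ[X]).Monic := monic_X_pow_sub_C n (by norm_num)
  have hmin : X ^ 5 - C n = minpoly ℚ a :=
    minpoly.eq_of_irreducible_of_monic hirr (by simp [ha]) hmon
  have hdvd : X ^ 5 - C n ∣ (Algebra.lmul ℚ K a).charpoly := by
    rw [hmin]
    exact minpoly.dvd ℚ a (Algebra.aeval_self_charpoly_lmul a)
  refine (eq_of_monic_of_dvd_of_natDegree_le hmon (LinearMap.charpoly_monic _) hdvd ?_)
  rw [LinearMap.charpoly_natDegree, hK, natDegree_X_pow_sub_C]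

theorem norm_intCast_sub (hK : finrank ℚ K = 5) {α : 𝓞 K} {n : ℤ} (hα : α ^ 5 = n)
    (hn : ∀ b : ℚ, b ^ 5 ≠ n) (r : ℤ) : Algebra.norm ℤ ((r : 𝓞 K) - α) = r ^ 5 - n := by
  have ha : ((α : K)) ^ 5 = ((n : ℚ) : K) := by
    have := congrArg (algebraMap (𝓞 K) K) hα
    simpa using this
  have h := LinearMap.eval_charpoly (Algebra.lmul ℚ K (α : K)) (r : ℚ)
  rw [charpoly_lmul_of_pow_five_eq hK ha hn] at h
  have h2 : Algebra.norm ℚ (((r : 𝓞 K) - α : 𝓞 K) : K) = (r : ℚ) ^ 5 - n := by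
    rw [Algebra.norm_apply]
    simp only [eval_sub, eval_pow, eval_X, eval_C] at h
    rw [h]
    congr 1
    ext
    simp
  rw [← Algebra.coe_norm_int] at h2
  exact_mod_cast h2

theorem trace_eq_zero_of_pow_five_eq (hK : finrank ℚ K = 5) {α : 𝓞 K} {n : ℤ} (hα : α ^ 5 = n)
    (hn : ∀ b : ℚ, b ^ 5 ≠ n) : Algebra.trace ℤ (𝓞 K) α = 0 := by
  have ha : ((α : K)) ^ 5 = ((n : ℚ) : K) := by
    have := congrArg (algebraMap (𝓞 K) K) hα
    simpa using this
  have h2 : Algebra.trace ℚ K (α : K) = 0 := by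
    rw [Algebra.trace_apply, LinearMap.trace_eq_matrix_trace ℚ (Free.chooseBasis ℚ K),
      Matrix.trace_eq_neg_charpoly_nextCoeff, LinearMap.charpoly_toMatrix,
      charpoly_lmul_of_pow_five_eq hK ha hn]
    rw [nextCoeff_of_natDegree_pos (by rw [natDegree_X_pow_sub_C]; norm_num),
      natDegree_X_pow_sub_C, coeff_sub, coeff_X_pow, coeff_C]
    norm_num
  rw [← Algebra.coe_trace_int] at h2
  exact_mod_cast h2

theorem rat_pow_five_ne {n : ℤ} {k : ℤ} (h1 : k ^ 5 < n) (h2 : n < (k + 1) ^ 5) (b : ℚ) :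
    b ^ 5 ≠ n := by
  intro h
  have hi : IsIntegral ℤ b := IsIntegral.of_pow (n := 5) (by norm_num) (h ▸ isIntegral_algebraMap)
  obtain ⟨m, rfl⟩ := IsIntegrallyClosed.isIntegral_iff.mp hi
  have h3 : m ^ 5 = n := by
    simp only [algebraMap_int_eq, eq_intCast] at h
    exact_mod_cast h
  have ho : Odd 5 := by decide
  have h4 : k < m := ho.strictMono_pow.lt_iff_lt.mp (h3 ▸ h1)
  have h5 : m < k + 1 := ho.strictMono_pow.lt_iff_lt.mp (h3 ▸ h2)
  lia

theorem discr_dvd (hK : finrank ℚ K = 5) {θ : 𝓞 K} (hθ : θ ^ 5 = 2) :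
    NumberField.discr K ∣ 50000 := by
  have e : Free.ChooseBasisIndex ℤ (𝓞 K) ≃ Fin 5 := Fintype.equivFinOfCardEq (by
    rw [← finrank_eq_card_chooseBasisIndex, RingOfIntegers.rank, hK])
  set b := (RingOfIntegers.basis K).reindex e with hb
  have hbd : Algebra.discr ℤ b = NumberField.discr K := by
    rw [hb, Basis.coe_reindex, Algebra.discr_reindex, NumberField.discr]
  have h := Algebra.discr_of_matrix_vecMul b (b.toMatrix (fun i : Fin 5 => θ ^ (i : ℕ)))
  rw [hbd] at h
  have h1 : Matrix.vecMul b ((b.toMatrix (fun i : Fin 5 => θ ^ (i : ℕ))).map (algebraMap ℤ (𝓞 K)))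
      = fun i : Fin 5 => θ ^ (i : ℕ) := by
    ext i
    rw [← b.sum_repr (θ ^ (i : ℕ))]
    simp [Matrix.vecMul, dotProduct, Basis.toMatrix_apply, mul_comm]
  rw [h1] at h
  have t1 : Algebra.trace ℤ (𝓞 K) θ = 0 :=
    trace_eq_zero_of_pow_five_eq hK (n := 2) (by simp [hθ])
      (rat_pow_five_ne (k := 1) (by norm_num) (by norm_num))
  have t2 : Algebra.trace ℤ (𝓞 K) (θ^2) = 0 :=
    trace_eq_zero_of_pow_five_eq hK (n := 4) (by push_cast; linear_combination (θ^5+2) * hθ)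
      (rat_pow_five_ne (k := 1) (by norm_num) (by norm_num))
  have t3 : Algebra.trace ℤ (𝓞 K) (θ^3) = 0 :=
    trace_eq_zero_of_pow_five_eq hK (n := 8)
      (by push_cast; linear_combination (θ^10+2*θ^5+4) * hθ)
      (rat_pow_five_ne (k := 1) (by norm_num) (by norm_num))
  have t4 : Algebra.trace ℤ (𝓞 K) (θ^4) = 0 :=
    trace_eq_zero_of_pow_five_eq hK (n := 16)
      (by push_cast; linear_combination (θ^15+2*θ^10+4*θ^5+8) * hθ)
      (rat_pow_five_ne (k := 1) (by norm_num) (by norm_num))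
  have t0 : Algebra.trace ℤ (𝓞 K) 1 = 5 := by
    have := Algebra.trace_algebraMap (S := 𝓞 K) (1 : ℤ)
    simpa [RingOfIntegers.rank, hK] using this
  have hs : ∀ x : 𝓞 K, Algebra.trace ℤ (𝓞 K) (2 * x) = 2 * Algebra.trace ℤ (𝓞 K) x := by
    intro x; rw [two_mul, map_add, two_mul]
  have t5 : Algebra.trace ℤ (𝓞 K) (θ^5) = 10 := by rw [hθ, ← mul_one 2, hs, t0]; norm_num
  have t6 : Algebra.trace ℤ (𝓞 K) (θ^6) = 0 := by rw [pow_succ, hθ, hs, t1]; norm_num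
  have t7 : Algebra.trace ℤ (𝓞 K) (θ^7) = 0 := by
    rw [show θ^7 = θ^5*θ^2 by ring, hθ, hs, t2]; norm_num
  have t8 : Algebra.trace ℤ (𝓞 K) (θ^8) = 0 := by
    rw [show θ^8 = θ^5*θ^3 by ring, hθ, hs, t3]; norm_num
  have hd : Algebra.discr ℤ (fun i : Fin 5 => θ ^ (i : ℕ)) = 50000 := by
    have hM : Algebra.traceMatrix ℤ (fun i : Fin 5 => θ ^ (i : ℕ)) =
        !![5, 0, 0, 0, 0; 0, 0, 0, 0, 10; 0, 0, 0, 10, 0; 0, 0, 10, 0, 0; 0, 10, 0, 0, 0] := by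
      ext i j
      rw [Algebra.traceMatrix_apply, Algebra.traceForm_apply, ← pow_add]
      fin_cases i <;> fin_cases j <;> simp [t0,t1,t2,t3,t4,t5,t6,t7,t8]
    rw [Algebra.discr_def, hM]
    simp [Matrix.det_succ_row_zero, Fin.sum_univ_succ, Fin.succAbove]
  rw [hd] at h
  exact ⟨_, by rw [h, mul_comm]⟩

theorem nrRealPlaces_eq_one (hK : finrank ℚ K = 5) {θ : 𝓞 K} (hθ : θ ^ 5 = 2) :
    InfinitePlace.nrRealPlaces K = 1 := by
  have ha : (θ : K) ^ 5 = ((2 : ℚ) : K) := by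
    have h := congrArg (algebraMap (𝓞 K) K) hθ
    rw [map_pow, map_ofNat] at h
    simpa using h
  have hmin : X ^ 5 - C (2 : ℚ) = minpoly ℚ (θ : K) :=
    minpoly.eq_of_irreducible_of_monic (X_pow_sub_C_irreducible_of_prime Nat.prime_five
      (by simpa using rat_pow_five_ne (n := 2) (k := 1) (by norm_num) (by norm_num)))
      (by simp [ha]) (monic_X_pow_sub_C _ (by norm_num))
  have htop := (Field.primitive_element_iff_minpoly_natDegree_eq ℚ (θ : K)).mpr
    (by rw [← hmin, natDegree_X_pow_sub_C, hK])
  classical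
  refine le_antisymm ?_ (InfinitePlace.nrRealPlaces_pos_of_odd_finrank (by rw [hK]; decide))
  rw [← InfinitePlace.card_real_embeddings, Fintype.card_le_one_iff]
  rintro ⟨φ, hφ⟩ ⟨ψ, hψ⟩
  have hval : ∀ (χ : K →+* ℂ) (hχ : ComplexEmbedding.IsReal χ), χ θ = (hχ.embedding θ : ℝ) ∧
      hχ.embedding θ ^ 5 = 2 := by
    intro χ hχ
    exact ⟨(hχ.coe_embedding_apply _).symm, by rw [← map_pow, ha]; simp [map_ofNat]⟩
  have h1 : φ θ = ψ θ := by
    rw [(hval φ hφ).1, (hval ψ hψ).1]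
    congr 1
    exact (Odd.strictMono_pow (by decide : Odd 5)).injective
      ((hval φ hφ).2.trans (hval ψ hψ).2.symm)
  ext x
  have hx : x ∈ IntermediateField.adjoin ℚ {(θ : K)} := htop ▸ IntermediateField.mem_top
  induction hx using IntermediateField.adjoin_induction with
  | mem x hx => rw [Set.mem_singleton_iff.mp hx]; exact h1
  | algebraMap x => simp
  | add x y _ _ h h' => simp only [map_add] at *; rw [h, h']
  | inv x _ h => simp only [map_inv₀] at *; rw [h]
  | mul x y _ _ h h' => simp only [map_mul] at *; rw [h, h']

theorem nrComplexPlaces_eq_two (hK : finrank ℚ K = 5) {θ : 𝓞 K} (hθ : θ ^ 5 = 2) :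
    InfinitePlace.nrComplexPlaces K = 2 := by
  have h := InfinitePlace.card_add_two_mul_card_eq_rank K
  rw [nrRealPlaces_eq_one hK hθ, hK] at h
  lia

theorem unitsRank_eq_two (hK : finrank ℚ K = 5) {θ : 𝓞 K} (hθ : θ ^ 5 = 2) :
    Units.rank K = 2 := by
  rw [Units.rank, InfinitePlace.card_eq_nrRealPlaces_add_nrComplexPlaces,
    nrRealPlaces_eq_one hK hθ, nrComplexPlaces_eq_two hK hθ]

theorem minkowskiBound_lt (hK : finrank ℚ K = 5) {θ : 𝓞 K} (hθ : θ ^ 5 = 2) :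
    (4 / Real.pi) ^ InfinitePlace.nrComplexPlaces K *
      ((finrank ℚ K).factorial / (finrank ℚ K) ^ (finrank ℚ K) *
        √|(NumberField.discr K : ℝ)|) < 14 := by
  rw [nrComplexPlaces_eq_two hK hθ, hK]
  have hd : |(NumberField.discr K : ℝ)| ≤ 50000 := by
    have := Int.le_of_dvd (by norm_num) ((abs_dvd _ _).mpr (discr_dvd hK hθ))
    exact_mod_cast this
  have h1 : √|(NumberField.discr K : ℝ)| ≤ 223.61 := by
    rw [Real.sqrt_le_left (by norm_num)]
    linarith
  have h2 : 4 / Real.pi ≤ 1.2733 := by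
    rw [div_le_iff₀ Real.pi_pos]
    linarith [Real.pi_gt_d4]
  have h3 : (4 / Real.pi) ^ 2 ≤ 1.2733 ^ 2 := by gcongr
  calc _ ≤ (1.2733 : ℝ) ^ 2 * ((Nat.factorial 5 : ℕ) / ((5 : ℕ) : ℝ) ^ 5 * 223.61) := by gcongr
    _ < 14 := by norm_num [Nat.factorial]

/-- A nonzero prime ideal containing an element of prime norm is generated by it. -/
theorem isPrincipal_of_mem_of_prime_norm {P : Ideal (𝓞 K)} (hP : P ≠ ⊤) {g : 𝓞 K} (hg : g ∈ P)
    (hn : (Algebra.norm ℤ g).natAbs.Prime) : P = Ideal.span {g} := by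
  have hpr : (Ideal.span {g}).IsPrime := Ideal.isPrime_of_irreducible_absNorm
    (by rw [Ideal.absNorm_span_singleton]; exact hn)
  have hne : Ideal.span {g} ≠ ⊥ := by
    rw [Ne, Ideal.span_singleton_eq_bot]
    rintro rfl
    simp [Algebra.norm_zero] at hn
    exact absurd hn (by norm_num)
  exact ((hpr.isMaximal hne).eq_of_le hP
    ((Ideal.span_singleton_le_iff_mem P).mpr hg)).symm

theorem norm_theta (hK : finrank ℚ K = 5) {θ : 𝓞 K} (hθ : θ ^ 5 = 2) :
    Algebra.norm ℤ θ = 2 := by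
  have := norm_intCast_sub hK (α := -θ) (n := -2) (by rw [Odd.neg_pow (by decide), hθ]; simp)
    (rat_pow_five_ne (k := -2) (by norm_num) (by norm_num)) 0
  simpa using this

theorem norm_one_add_theta (hK : finrank ℚ K = 5) {θ : 𝓞 K} (hθ : θ ^ 5 = 2) :
    Algebra.norm ℤ (1 + θ) = 3 := by
  have := norm_intCast_sub hK (α := -θ) (n := -2) (by rw [Odd.neg_pow (by decide), hθ]; simp)
    (rat_pow_five_ne (k := -2) (by norm_num) (by norm_num)) 1
  simpa using this

theorem norm_one_add_theta_sq (hK : finrank ℚ K = 5) {θ : 𝓞 K} (hθ : θ ^ 5 = 2) :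
    Algebra.norm ℤ (1 + θ ^ 2) = 5 := by
  have := norm_intCast_sub hK (α := -θ ^ 2) (n := -4)
    (by push_cast; linear_combination (-θ ^ 5 - 2) * hθ)
    (rat_pow_five_ne (k := -2) (by norm_num) (by norm_num)) 1
  simpa using this

theorem norm_one_sub_theta_cube (hK : finrank ℚ K = 5) {θ : 𝓞 K} (hθ : θ ^ 5 = 2) :
    Algebra.norm ℤ (1 - θ ^ 3) = -7 := by
  have := norm_intCast_sub hK (α := θ ^ 3) (n := 8)
    (by push_cast; linear_combination (θ ^ 10 + 2 * θ ^ 5 + 4) * hθ)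
    (rat_pow_five_ne (k := 1) (by norm_num) (by norm_num)) 1
  simpa using this

theorem norm_three_sub (hK : finrank ℚ K = 5) {θ : 𝓞 K} (hθ : θ ^ 5 = 2) :
    Algebra.norm ℤ (3 - 2 * θ ^ 3) = -13 := by
  have := norm_intCast_sub hK (α := 2 * θ ^ 3) (n := 256)
    (by push_cast; linear_combination 32 * (θ ^ 10 + 2 * θ ^ 5 + 4) * hθ)
    (rat_pow_five_ne (k := 3) (by norm_num) (by norm_num)) 3
  simpa using this

theorem exists_mem_prime_norm (hK : finrank ℚ K = 5) {θ : 𝓞 K} (hθ : θ ^ 5 = 2)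
    {P : Ideal (𝓞 K)} (hP : P.IsPrime) (hP0 : P ≠ ⊥) (hle : Ideal.absNorm P < 14) :
    ∃ g ∈ P, (Algebra.norm ℤ g).natAbs.Prime := by
  have := hP.isMaximal hP0
  let : Field (𝓞 K ⧸ P) := Ideal.Quotient.field P
  have : Finite (𝓞 K ⧸ P) := Ideal.finiteQuotientOfFreeOfNeBot P hP0
  let : Fintype (𝓞 K ⧸ P) := Fintype.ofFinite _
  have hq : Ideal.absNorm P = Fintype.card (𝓞 K ⧸ P) := by
    rw [Ideal.absNorm_apply, Submodule.cardQuot_apply, Nat.card_eq_fintype_card]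
  have hpp : IsPrimePow (Ideal.absNorm P) := hq ▸ FiniteField.isPrimePow_card _
  set t : 𝓞 K ⧸ P := Ideal.Quotient.mk P θ with ht
  have ht5 : t ^ 5 = 2 := by rw [ht, ← map_pow, hθ, map_ofNat]
  have htq : t ^ Ideal.absNorm P = t := hq ▸ FiniteField.pow_card t
  have hq0 : ((Ideal.absNorm P : ℕ) : 𝓞 K ⧸ P) = 0 := by
    rw [hq]; exact Nat.cast_card_eq_zero _
  have key : ∀ g : 𝓞 K, Ideal.Quotient.mk P g = 0 → (Algebra.norm ℤ g).natAbs.Prime →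
      ∃ g ∈ P, (Algebra.norm ℤ g).natAbs.Prime :=
    fun g hg hn => ⟨g, Ideal.Quotient.eq_zero_iff_mem.mp hg, hn⟩
  have hg2 : t = 0 → ∃ g ∈ P, (Algebra.norm ℤ g).natAbs.Prime := fun h =>
    key θ h (by rw [norm_theta hK hθ]; norm_num)
  have hg3 : 1 + t = 0 → ∃ g ∈ P, (Algebra.norm ℤ g).natAbs.Prime := fun h =>
    key (1 + θ) (by simpa using h) (by rw [norm_one_add_theta hK hθ]; norm_num)
  generalize Ideal.absNorm P = q at *
  have h2 : (2 : 𝓞 K ⧸ P) = 0 → ∃ g ∈ P, (Algebra.norm ℤ g).natAbs.Prime := fun h =>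
    hg2 (pow_eq_zero_iff (n := 5) (by norm_num) |>.mp (ht5.trans h))
  have ht0 : t = 0 ∨ t ≠ 0 := em _
  interval_cases q
  · exact absurd hpp not_isPrimePow_zero
  · exact absurd hpp not_isPrimePow_one
  · exact h2 (by exact_mod_cast hq0)
  · push_cast at hq0
    exact hg3 (by linear_combination ht5 - (t ^ 2 + 1) * htq + hq0)
  · push_cast at hq0
    exact h2 (pow_eq_zero_iff (n := 2) (by norm_num) |>.mp (by linear_combination hq0))
  · push_cast at hq0
    refine key (1 + θ ^ 2) ?_ (by rw [norm_one_add_theta_sq hK hθ]; norm_num)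
    have h : t = 2 := htq.symm.trans ht5
    simp only [map_add, map_pow, map_one, ← ht, h]
    linear_combination hq0
  · exact absurd hpp (by decide +kernel)
  · push_cast at hq0
    have h : t * (2 * t - 1) = 0 := by linear_combination htq - t ^ 2 * ht5
    rcases mul_eq_zero.mp h with h | h
    · exact hg2 h
    · refine key (1 - θ ^ 3) ?_ (by rw [norm_one_sub_theta_cube hK hθ]; norm_num)
      simp only [map_sub, map_pow, map_one, ← ht]
      linear_combination t ^ 3 * hq0 - (4 * t ^ 2 + 2 * t + 1) * h
  · push_cast at hq0
    exact h2 (pow_eq_zero_iff (n := 3) (by norm_num) |>.mp (by linear_combination hq0))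
  · push_cast at hq0
    have h3 : (3 : 𝓞 K ⧸ P) = 0 :=
      pow_eq_zero_iff (n := 2) (by norm_num) |>.mp (by linear_combination hq0)
    have h : t ^ 2 = 4 := by linear_combination (t ^ 5 + 2) * ht5 - t * htq
    exact hg3 (by linear_combination ht5 - t * (t ^ 2 + 4) * h + (1 - 5 * t) * h3)
  · exact absurd hpp (by decide +kernel)
  · push_cast at hq0
    exact hg2 (by linear_combination 4 * ((t * (t ^ 5 + 2)) * ht5 - htq) * (-1) - t * hq0)
  · exact absurd hpp (by decide +kernel)
  · push_cast at hq0
    have h : t ^ 3 = 8 := by linear_combination (t ^ 10 + 2 * t ^ 5 + 4) * ht5 - t ^ 2 * htq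
    refine key (3 - 2 * θ ^ 3) ?_ (by rw [norm_three_sub hK hθ]; norm_num)
    simp only [map_sub, map_mul, map_pow, map_ofNat, ← ht, h]
    linear_combination -hq0

theorem isPrincipalIdealRing_of_pow_five_eq_two (hK : finrank ℚ K = 5) {θ : 𝓞 K}
    (hθ : θ ^ 5 = 2) : IsPrincipalIdealRing (𝓞 K) := by
  refine RingOfIntegers.isPrincipalIdealRing_of_isPrincipal_of_norm_le_of_isPrime ?_
  intro I hI hle
  have h0 : (I : Ideal (𝓞 K)) ≠ ⊥ := nonZeroDivisors.coe_ne_zero I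
  have hlt : Ideal.absNorm (I : Ideal (𝓞 K)) < 14 := by
    exact_mod_cast hle.trans_lt (minkowskiBound_lt hK hθ)
  obtain ⟨g, hg, hn⟩ := exists_mem_prime_norm hK hθ hI h0 hlt
  exact ⟨g, isPrincipal_of_mem_of_prime_norm hI.ne_top hg hn⟩

end NumberField

section Local

variable {K : Type*} [Field K]

/-- `R` is a discrete valuation ring of `K` with uniformizer a fifth root of two and residue field
of two elements. -/
structure IsTwoAdic (R : Subring K) (θ : R) : Prop where
  pow_five : θ ^ 5 = 2
  residue : ∀ x : R, (∃ y, x = θ * y) ∨ ∃ y, x = 1 + θ * y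
  one_ne : ∀ y : R, 1 ≠ θ * y
  exists_inv : ∀ y : R, ∃ z : R, (1 + θ * y) * (1 + θ * z) = 1
  factor : ∀ x : K, x ≠ 0 → ∃ n : ℤ, ∃ y : R, x = (θ : K) ^ n * (1 + θ * y)

/-- Up to squares, `x` is `1` modulo `θ ^ j` but not modulo `θ ^ (j + 1)`. -/
def HasDefect (R : Subring K) (θ : R) (j : ℕ) (x : K) : Prop :=
  ∃ z : K, z ≠ 0 ∧ ∃ y : R, x * z ^ 2 = 1 + θ ^ j * (1 + θ * y)

/-- `x` is a square times an element congruent to `1` modulo `4 * θ`. -/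
def IsLocalSquare (R : Subring K) (θ : R) (x : K) : Prop :=
  ∃ z : K, z ≠ 0 ∧ ∃ y : R, x * z ^ 2 = 1 + θ ^ 11 * y

namespace IsTwoAdic

variable [CharZero K] {R : Subring K} {θ : R}

section
variable (h : IsTwoAdic R θ)
include h

omit [CharZero K] in
theorem pow_five' : (θ : K) ^ 5 = 2 := by
  have := congrArg R.subtype h.pow_five
  rwa [map_pow, map_ofNat] at this

theorem ne_zero : (θ : K) ≠ 0 := by
  intro h0
  have := h.pow_five'
  rw [h0] at this
  norm_num at this

omit [CharZero K] in
theorem unit_ne_zero (y : R) : (1 + θ * y : K) ≠ 0 := by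
  intro h0
  refine h.one_ne (-y) (Subtype.ext ?_)
  push_cast
  linear_combination h0

theorem le_of_eq {a b : ℤ} {x y : R} (e : (θ : K) ^ a * (1 + θ * x) = θ ^ b * y) : b ≤ a := by
  by_contra! hlt
  obtain ⟨k, rfl⟩ : ∃ k : ℕ, b = a + 1 + k := ⟨(b - a - 1).toNat, by lia⟩
  have h0 := h.ne_zero
  rw [zpow_add₀ h0, zpow_add₀ h0, zpow_one, zpow_natCast, mul_assoc, mul_assoc] at e
  have e' := mul_left_cancel₀ (zpow_ne_zero a h0) e
  refine h.one_ne (θ ^ k * y - x) (Subtype.ext ?_)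
  push_cast
  linear_combination e'

theorem shape {τ : K} (hτ : τ ≠ 0) :
    (∃ k : ℤ, k < 5 ∧ ∃ y : R, τ * (τ + 2) = θ ^ (2 * k) * (1 + θ * y)) ∨
      ∃ s : R, τ = θ ^ 5 * s := by
  obtain ⟨k, y, rfl⟩ := h.factor τ hτ
  have h0 := h.ne_zero
  rcases lt_or_ge k 5 with hk | hk
  · refine .inl ⟨k, hk, ?_⟩
    obtain ⟨m, hm⟩ : ∃ m : ℕ, 5 = k + 1 + m := ⟨(5 - k - 1).toNat, by lia⟩
    have h2 : (2 : K) = θ ^ k * θ * θ ^ m := by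
      rw [← h.pow_five', ← zpow_natCast, ← zpow_natCast, ← zpow_add_one₀ h0, ← zpow_add₀ h0, ← hm]
      rfl
    refine ⟨y + (1 + θ * y) * (y + θ ^ m), ?_⟩
    rw [two_mul, zpow_add₀ h0]
    push_cast
    linear_combination (θ : K) ^ k * (1 + θ * y) * h2
  · obtain ⟨m, rfl⟩ : ∃ m : ℕ, k = 5 + m := ⟨(k - 5).toNat, by lia⟩
    refine .inr ⟨θ ^ m * (1 + θ * y), ?_⟩
    rw [zpow_add₀ h0, zpow_natCast, show (5 : ℤ) = (5 : ℕ) from rfl, zpow_natCast]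
    push_cast
    ring

theorem not_isSquare {j : ℕ} (hj : Odd j ∧ j < 10 ∨ j = 10) {x : K} (hx : HasDefect R θ j x) :
    ¬ IsSquare x := by
  rintro ⟨s, rfl⟩
  obtain ⟨z, hz, y, e⟩ := hx
  have h0 := h.ne_zero
  set τ := s * z - 1 with hτ
  have e1 : τ * (τ + 2) = (θ : K) ^ (j : ℤ) * (1 + θ * y) := by
    rw [hτ, zpow_natCast]; linear_combination e
  have hτ0 : τ ≠ 0 := by
    intro h'
    rw [h', zero_mul] at e1
    exact mul_ne_zero (zpow_ne_zero _ h0) (h.unit_ne_zero y) e1.symm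
  rcases h.shape hτ0 with ⟨k, hk, y', e2⟩ | ⟨t, ht⟩
  · have e3 := e1.symm.trans e2
    have l1 := h.le_of_eq (y := 1 + θ * y') (by push_cast; exact e3)
    have l2 := h.le_of_eq (y := 1 + θ * y) (by push_cast; exact e3.symm)
    have l3 : (j : ℤ) = 2 * k := le_antisymm l2 l1
    rcases hj with ⟨⟨i, rfl⟩, -⟩ | rfl
    · push_cast at l3; lia
    · push_cast at l3; lia
  · have h5 := h.pow_five'
    have e4 : ∃ w : R, (t : K) * (t + 1) = θ * w := by
      rcases h.residue t with ⟨u, rfl⟩ | ⟨u, rfl⟩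
      · exact ⟨u * (θ * u + 1), by push_cast; ring⟩
      · exact ⟨(1 + θ * u) * (u + θ ^ 4), by push_cast; linear_combination -(1 + θ * u : K) * h5⟩
    obtain ⟨w, e4⟩ := e4
    have := h.le_of_eq (a := j) (b := 11) (x := y) (y := w) (by
      rw [← e1, ht, show (11 : ℤ) = (11 : ℕ) from rfl, zpow_natCast, ← h5]
      linear_combination (θ : K) ^ 10 * e4)
    rcases hj with hj | hj <;> lia

theorem sqrt_one_add {n : ℕ} {σ : K} {y : R} (e : σ ^ 2 = 1 + θ ^ (10 + n) * y) :
    ∃ f : R, σ = 1 + θ ^ (5 + n) * f ∨ σ = -(1 + θ ^ (5 + n) * f) := by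
  have h0 := h.ne_zero
  have h5 := h.pow_five'
  set τ := σ - 1 with hτ
  have e1 : τ * (τ + 2) = (θ : K) ^ (10 + n) * y := by
    rw [hτ]; linear_combination e
  rcases eq_or_ne τ 0 with hτ0 | hτ0
  · exact ⟨0, .inl (by rw [sub_eq_zero] at hτ0; simp [hτ0])⟩
  rcases h.shape hτ0 with ⟨k, hk, y', e2⟩ | ⟨t, ht⟩
  · have := h.le_of_eq (a := 2 * k) (b := (10 + n : ℕ)) (x := y') (y := y)
      (by rw [← e2, e1, zpow_natCast])
    push_cast at this
    lia
  · have e3 : (t : K) * (t + 1) = θ ^ n * y := by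
      refine mul_left_cancel₀ (pow_ne_zero 10 h0) ?_
      rw [ht] at e1
      linear_combination e1 + (θ : K) ^ 5 * t * h5
    have hs : σ = 1 + θ ^ 5 * t := by rw [← ht, hτ]; ring
    rcases h.residue t with ⟨u, rfl⟩ | ⟨u, rfl⟩
    · obtain ⟨z, hz⟩ := h.exists_inv u
      have hz' : (1 + θ * u : K) * (1 + θ * z) = 1 := by exact_mod_cast congrArg Subtype.val hz
      refine ⟨y * (1 + θ * z), .inl ?_⟩
      push_cast at *
      rw [hs]
      linear_combination (θ : K) ^ 5 * (1 + θ * z) * e3 - (θ : K) ^ 5 * (θ * u) * hz'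
    · obtain ⟨z, hz⟩ := h.exists_inv u
      have hz' : (1 + θ * u : K) * (1 + θ * z) = 1 := by exact_mod_cast congrArg Subtype.val hz
      refine ⟨-(y * (1 + θ * z)), .inr ?_⟩
      push_cast at *
      rw [hs]
      linear_combination (θ : K) ^ 5 * (1 + θ * z) * e3 - (θ : K) ^ 5 * (2 + θ * u) * hz' - h5

end

omit [CharZero K] in
theorem _root_.HasDefect.mul {i j : ℕ} (hij : i < j) {x y : K} (hx : HasDefect R θ i x)
    (hy : HasDefect R θ j y) : HasDefect R θ i (x * y) := by
  obtain ⟨z, hz, u, e⟩ := hx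
  obtain ⟨w, hw, v, f⟩ := hy
  obtain ⟨k, rfl⟩ := Nat.exists_eq_add_of_lt hij
  refine ⟨z * w, mul_ne_zero hz hw, u + θ ^ k * (1 + θ * v) * (1 + θ ^ i * (1 + θ * u)), ?_⟩
  push_cast
  linear_combination (y * w ^ 2) * e + (1 + (θ : K) ^ i * (1 + θ * u)) * f

omit [CharZero K] in
theorem _root_.HasDefect.mul_isLocalSquare {i : ℕ} (hi : i < 11) {x y : K}
    (hx : HasDefect R θ i x) (hy : IsLocalSquare R θ y) : HasDefect R θ i (x * y) := by
  obtain ⟨z, hz, u, e⟩ := hx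
  obtain ⟨w, hw, v, f⟩ := hy
  obtain ⟨k, hk⟩ := Nat.exists_eq_add_of_lt hi
  refine ⟨z * w, mul_ne_zero hz hw, u + θ ^ k * v * (1 + θ ^ i * (1 + θ * u)), ?_⟩
  rw [hk] at f
  push_cast
  linear_combination (y * w ^ 2) * e + (1 + (θ : K) ^ i * (1 + θ * u)) * f

omit [CharZero K] in
theorem _root_.IsLocalSquare.mul {x y : K} (hx : IsLocalSquare R θ x)
    (hy : IsLocalSquare R θ y) : IsLocalSquare R θ (x * y) := by
  obtain ⟨z, hz, u, e⟩ := hx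
  obtain ⟨w, hw, v, f⟩ := hy
  refine ⟨z * w, mul_ne_zero hz hw, u + v * (1 + θ ^ 11 * u), ?_⟩
  push_cast
  linear_combination (y * w ^ 2) * e + (1 + (θ : K) ^ 11 * u) * f

/-- `x` is a square or has one of the defects `1`, `3`, `5`, `10`, and this defect is at least
`i`. -/
def _root_.IsTame (R : Subring K) (θ : R) (i : ℕ) (x : K) : Prop :=
  IsSquare x ∨ ∃ j, i ≤ j ∧ (j = 1 ∨ j = 3 ∨ j = 5 ∨ j = 10) ∧ HasDefect R θ j x

omit [CharZero K] in
theorem _root_.IsTame.mono {i j : ℕ} (hij : i ≤ j) {x : K} (hx : IsTame R θ j x) :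
    IsTame R θ i x := by
  rcases hx with hx | ⟨k, hk, hx⟩
  · exact .inl hx
  · exact .inr ⟨k, hij.trans hk, hx⟩

omit [CharZero K] in
theorem _root_.HasDefect.mul_sq {j : ℕ} {x s : K} (hs : s ≠ 0) (hx : HasDefect R θ j x) :
    HasDefect R θ j (x * s ^ 2) := by
  obtain ⟨z, hz, u, e⟩ := hx
  refine ⟨z / s, div_ne_zero hz hs, u, ?_⟩
  rw [← e]
  field_simp

omit [CharZero K] in
theorem _root_.IsTame.mul_sq {j : ℕ} {x s : K} (hs : s ≠ 0) (hx : IsTame R θ j x) :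
    IsTame R θ j (x * s ^ 2) := by
  rcases hx with hx | ⟨k, hk, hk', hx⟩
  · exact .inl (hx.mul (.sq s))
  · exact .inr ⟨k, hk, hk', hx.mul_sq hs⟩

theorem isSquare_of_isTame (h : IsTwoAdic R θ) {i : ℕ} {x : K} (hx : IsTame R θ i x)
    (hx' : IsLocalSquare R θ x) : IsSquare x := by
  rcases hx with hx | ⟨j, -, hj', hx⟩
  · exact hx
  · refine absurd ⟨x, rfl⟩ (h.not_isSquare ?_ (hx.mul_isLocalSquare ?_ hx'))
    · rcases hj' with rfl | rfl | rfl | rfl <;> decide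
    · lia

theorem not_isTame (h : IsTwoAdic R θ) {i : ℕ} {x : K} (hx : IsTame R θ i x) :
    ¬ HasDefect R θ 7 x := by
  intro h7
  rcases hx with hx | ⟨j, -, hj', hx⟩
  · exact h.not_isSquare (by decide) h7 hx
  · rcases lt_or_gt_of_ne (show j ≠ 7 by lia) with hlt | hlt
    · refine h.not_isSquare ?_ (hx.mul hlt h7) ⟨x, rfl⟩
      rcases hj' with rfl | rfl | rfl | rfl <;> decide
    · exact h.not_isSquare (by decide) (h7.mul hlt hx) ⟨x, rfl⟩

section
variable (h : IsTwoAdic R θ)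
include h

omit h [CharZero K] in
@[simp, norm_cast]
theorem _root_.Subring.val_ofNat (n : ℕ) [n.AtLeastTwo] : ((ofNat(n) : R) : K) = ofNat(n) :=
  map_ofNat R.subtype n

omit [CharZero K] in
theorem hasDefect_of_eq {j : ℕ} (hj : 0 < j) {x z : K} {y : R}
    (e : x * z ^ 2 = 1 + θ ^ j * (1 + θ * y)) : HasDefect R θ j x := by
  refine ⟨z, ?_, y, e⟩
  rintro rfl
  obtain ⟨k, rfl⟩ := Nat.exists_eq_add_of_lt hj
  refine h.unit_ne_zero (θ ^ k * (1 + θ * y)) ?_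
  push_cast
  linear_combination -e

omit [CharZero K] in
theorem isLocalSquare_of_eq {x z : K} {y : R} (e : x * z ^ 2 = 1 + θ ^ 11 * y) :
    IsLocalSquare R θ x := by
  refine ⟨z, ?_, y, e⟩
  rintro rfl
  refine h.unit_ne_zero (θ ^ 10 * y) ?_
  push_cast
  linear_combination -e

omit [CharZero K] in
theorem hasDefect_sub_one : HasDefect R θ 1 (θ - 1 : K) :=
  h.hasDefect_of_eq one_pos (z := 1) (y := -θ ^ 3)
    (by push_cast; linear_combination h.pow_five')

omit [CharZero K] in
theorem hasDefect_cube_add_sq_sub_one : HasDefect R θ 3 (θ ^ 3 + θ ^ 2 - 1 : K) :=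
  h.hasDefect_of_eq (by norm_num) (z := 1 + θ) (y := 3 + θ ^ 4 - θ ^ 2)
    (by push_cast; linear_combination (1 + θ - θ ^ 3 : K) * h.pow_five')

omit [CharZero K] in
theorem hasDefect_neg_one : HasDefect R θ 5 (-1 : K) :=
  h.hasDefect_of_eq (by norm_num) (z := 1) (y := -θ ^ 4)
    (by push_cast; linear_combination (1 + θ ^ 5 : K) * h.pow_five')

omit [CharZero K] in
theorem hasDefect_one_add_sq : HasDefect R θ 10 (1 + θ ^ 2 : K) :=
  h.hasDefect_of_eq (by norm_num) (z := 1 - 3 * θ - 3 * θ ^ 2 - 4 * θ ^ 3 - 4 * θ ^ 4)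
    (y := 31 + 41 * θ + 29 * θ ^ 2 + 23 * θ ^ 3 + 22 * θ ^ 4)
    (by
      push_cast
      linear_combination (3 * θ - 2 * θ ^ 2 - 2 * θ ^ 3 - 14 * θ ^ 4 - 29 * θ ^ 5 - 31 * θ ^ 6
        - 41 * θ ^ 7 - 29 * θ ^ 8 - 23 * θ ^ 9 - 22 * θ ^ 10 : K) * h.pow_five')

omit [CharZero K] in
theorem hasDefect_seven (k l : R) :
    HasDefect R θ 7 ((θ - 1) * (θ * (3 + 4 * l) - (5 + 8 * k)) : K) :=
  h.hasDefect_of_eq (by norm_num) (z := 3 + 3 * θ + θ ^ 2 + 2 * θ ^ 3 + θ ^ 4)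
    (y := 3 + 2 * θ + 8 * θ ^ 3 - 10 * θ ^ 2 - 10 * θ ^ 4
      + θ ^ 3 * ((θ - 1) * (l - θ ^ 4 * k) * (3 + 3 * θ + θ ^ 2 + 2 * θ ^ 3 + θ ^ 4) ^ 2))
    (by
      push_cast
      linear_combination (21 * θ ^ 2 + 2 * θ ^ 4 + 13 * θ ^ 5 + 10 * θ ^ 7 - 22 - 9 * θ
        - 12 * θ ^ 3 - 8 * θ ^ 6 - (θ - 1) * (3 + 3 * θ + θ ^ 2 + 2 * θ ^ 3 + θ ^ 4) ^ 2 *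
        (θ * l * (θ ^ 5 + 2) - k * (θ ^ 10 + 2 * θ ^ 5 + 4)) : K) * h.pow_five')

omit [CharZero K] in
theorem isLocalSquare_sub_one_mul (k l : R) :
    IsLocalSquare R θ ((θ - 1) * (θ * (1 + 4 * l) - (1 + 8 * k)) : K) :=
  h.isLocalSquare_of_eq (z := 1 + θ + θ ^ 2 + θ ^ 3 + θ ^ 4)
    (y := (l - θ ^ 4 * k) * (1 + θ + θ ^ 2 + θ ^ 3 + θ ^ 4))
    (by
      have e : (θ - 1 : K) * (1 + θ + θ ^ 2 + θ ^ 3 + θ ^ 4) = 1 := by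
        linear_combination h.pow_five'
      push_cast
      linear_combination (-(1 + θ + θ ^ 2 + θ ^ 3 + θ ^ 4) *
        (θ * l * (θ ^ 5 + 2) - k * (θ ^ 10 + 2 * θ ^ 5 + 4)) : K) * h.pow_five' +
        (1 + θ + θ ^ 2 + θ ^ 3 + θ ^ 4) * (θ * (1 + 4 * l) - (1 + 8 * k)) * e + e)

omit [CharZero K] in
theorem exists_inv_one_add (n : ℕ) (c : R) :
    ∃ c' : R, (1 + θ ^ (n + 1) * c : K) * (1 + θ ^ (n + 1) * c') = 1 := by
  obtain ⟨z, hz⟩ := h.exists_inv (θ ^ n * c)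
  have hz' : (1 + θ * (θ ^ n * c) : K) * (1 + θ * z) = 1 := by
    simpa using congrArg R.subtype hz
  refine ⟨-c * (1 + θ * z), ?_⟩
  push_cast
  linear_combination (-(θ : K) ^ (n + 1) * c) * hz'

omit [CharZero K] in
theorem exists_inv' (c : R) : ∃ z : R, (1 + θ * c : K) * (1 + θ * z) = 1 := by
  obtain ⟨z, hz⟩ := h.exists_inv_one_add 0 c
  exact ⟨z, by simpa using hz⟩

theorem mem_or_inv_mem (x : K) : (∃ y : R, x = y) ∨ ∃ y : R, x * (θ * y) = 1 := by
  have h0 := h.ne_zero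
  rcases eq_or_ne x 0 with rfl | hx
  · exact .inl ⟨0, by simp⟩
  obtain ⟨k, y, rfl⟩ := h.factor x hx
  rcases le_or_gt 0 k with hk | hk
  · lift k to ℕ using hk
    exact .inl ⟨θ ^ k * (1 + θ * y), by simp⟩
  · obtain ⟨m, rfl⟩ : ∃ m : ℕ, k = -(m + 1) := ⟨(-k - 1).toNat, by lia⟩
    obtain ⟨z, hz⟩ := h.exists_inv' y
    refine .inr ⟨θ ^ m * (1 + θ * z), ?_⟩
    rw [zpow_neg, zpow_add_one₀ h0, zpow_natCast]
    push_cast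
    field_simp
    linear_combination hz

theorem descent (d : R)
    (hE : ∀ x y : K, x ≠ 0 → y ^ 2 = x * (x ^ 2 - 5 * d * x + 5 * d ^ 2) → IsTame R θ 1 x)
    (hE' : ∀ x y : K, x ≠ 0 → y ^ 2 = x * (x ^ 2 + 10 * d * x + 5 * d ^ 2) → IsTame R θ 1 x)
    {n : ℕ} {x y : K} {c : R} (hx : x * θ ^ (n + 12) = 1 + θ ^ 11 * c)
    (hy : y ^ 2 = x * (x ^ 2 - 5 * d * x + 5 * d ^ 2)) :
    ∃ x' y' : K, ∃ e c' : R, y' ^ 2 = x' * (x' ^ 2 - 5 * d * x' + 5 * d ^ 2) ∧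
      x' * (θ ^ (n + 2) * e) = 1 ∧
      (e * (1 - 5 * d * (θ ^ (n + 2) * e) + 5 * d ^ 2 * (θ ^ (n + 2) * e) ^ 2) : K) =
        (1 + θ ^ 11 * c') * (1 - 5 * d ^ 2 * (θ ^ (n + 2) * e) ^ 2) ^ 2 := by
  have h0 := h.ne_zero
  have h5 := h.pow_five'
  obtain ⟨c₁, hc₁⟩ := h.exists_inv_one_add 10 c
  norm_num at hc₁
  have hxi : x * (θ ^ 12 * (θ ^ n * (1 + θ ^ 11 * c₁))) = 1 := by
    linear_combination (1 + (θ : K) ^ 11 * c₁) * hx + hc₁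
  have hx0 : x ≠ 0 := left_ne_zero_of_mul_eq_one hxi
  obtain ⟨ε, hε⟩ : ∃ ε : R, (ε : K) = θ ^ n * (1 + θ ^ 11 * c₁) :=
    ⟨θ ^ n * (1 + θ ^ 11 * c₁), by push_cast; rfl⟩
  rw [← hε] at hxi
  have hρ : (y / x ^ 2) ^ 2 * x = 1 + θ ^ 12 * (-5 * d * ε + 5 * d ^ 2 * θ ^ 12 * ε ^ 2) := by
    have hinv : (θ : K) ^ 12 * ε = x⁻¹ := eq_inv_of_mul_eq_one_right hxi
    calc (y / x ^ 2) ^ 2 * x = 1 - 5 * d * x⁻¹ + 5 * d ^ 2 * x⁻¹ ^ 2 := by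
          rw [div_pow, hy]; field_simp
      _ = _ := by rw [← hinv]; ring
  obtain ⟨s, hs⟩ := h.isSquare_of_isTame (hE x y hx0 hy) (h.isLocalSquare_of_eq (z := y / x ^ 2)
    (y := θ * (-5 * d * ε + 5 * d ^ 2 * θ ^ 12 * ε ^ 2)) (by
      push_cast; linear_combination hρ))
  have hs0 : s ≠ 0 := by rintro rfl; simp [hs] at hx0
  obtain ⟨g, f, hg, hgf⟩ : ∃ g : K, ∃ f : R, g ^ 2 = s ^ 4 - 5 * d * s ^ 2 + 5 * d ^ 2 ∧
      g = s ^ 2 * (1 + θ ^ 7 * f) := by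
    have hg2 : (y / s) ^ 2 = s ^ 4 - 5 * d * s ^ 2 + 5 * d ^ 2 := by
      rw [div_pow, hy, hs]; field_simp
    have e : (y / s / s ^ 2) ^ 2 = 1 + θ ^ (10 + 2) *
        ((-5 * d * ε + 5 * d ^ 2 * θ ^ 12 * ε ^ 2 : R) : K) := by
      push_cast
      rw [← hρ, hs]
      field_simp
    obtain ⟨f, hf | hf⟩ := h.sqrt_one_add e
    · exact ⟨y / s, f, hg2, by rw [div_eq_iff (pow_ne_zero 2 hs0)] at hf; rw [hf]; ring⟩
    · exact ⟨-(y / s), f, by rw [neg_sq, hg2], by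
        rw [div_eq_iff (pow_ne_zero 2 hs0)] at hf; rw [hf]; ring⟩
  obtain ⟨X, hX⟩ : ∃ X : K, X = -5 * d + 2 * s ^ 2 + 2 * g := ⟨_, rfl⟩
  have hxs : (s : K) ^ 2 * (θ ^ 12 * ε) = 1 := by rw [← hxi, hs]; ring
  have hX' : X = θ ^ 10 * s ^ 2 * (1 + θ * (θ * (f - 5 * d * ε))) := by
    rw [hX, hgf]
    linear_combination (-(θ ^ 5 + 2) * s ^ 2 - s ^ 2 * θ ^ 7 * f : K) * h5 + (5 * d : K) * hxs
  have hXE : X ^ 2 + 10 * d * X + 5 * d ^ 2 = 4 * s ^ 2 * X := by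
    rw [hX]; linear_combination 4 * hg
  obtain ⟨z, hz⟩ := h.exists_inv' (θ * (f - 5 * d * ε))
  push_cast at hz
  have hXi : X * (θ ^ 2 * (θ ^ n * (1 + θ ^ 11 * c₁) * (1 + θ * z))) = 1 := by
    rw [← hε, hX']; linear_combination (s ^ 2 * (θ ^ 12 * ε) : K) * hz + hxs
  have hX0 : X ≠ 0 := left_ne_zero_of_mul_eq_one hXi
  obtain ⟨e, he⟩ : ∃ e : R, (e : K) = θ ^ n * (1 + θ ^ 11 * c₁) * (1 + θ * z) :=
    ⟨θ ^ n * (1 + θ ^ 11 * c₁) * (1 + θ * z), by push_cast; rfl⟩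
  rw [← he] at hXi
  obtain ⟨v, hv⟩ := h.exists_inv' (θ * d * e)
  push_cast at hv
  have hXD : IsLocalSquare R θ X := by
    refine h.isLocalSquare_of_eq (z := 2 * s * (θ ^ 2 * e) * (1 + θ * v))
      (y := (θ ^ 6 * d * e + θ ^ 3 * d ^ 2 * e ^ 2) * (1 + θ * v) ^ 2) ?_
    have e1 : (2 * s * (θ ^ 2 * e)) ^ 2 * X =
        1 + 10 * d * (θ ^ 2 * e) + 5 * d ^ 2 * (θ ^ 2 * e) ^ 2 := by
      linear_combination -(θ ^ 2 * e : K) ^ 2 * hXE +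
        (X * (θ ^ 2 * e) + 1 + 10 * d * (θ ^ 2 * e) : K) * hXi
    push_cast
    linear_combination (1 + θ * v : K) ^ 2 * e1 +
      ((1 + θ * (θ * d * e)) * (1 + θ * v) + 1) * hv -
      (1 + θ * v : K) ^ 2 * ((θ ^ 5 + 2) * d ^ 2 * (θ ^ 2 * e) ^ 2 +
        (θ ^ 10 + 2 * θ ^ 5 + 4) * d * (θ ^ 2 * e)) * h5
  obtain ⟨κ, hκ⟩ := h.isSquare_of_isTame (hE' X (2 * s * X) hX0
    (by linear_combination -X * hXE)) hXD
  obtain ⟨κ, hκ, i, hi⟩ : ∃ κ' : K, X = κ' ^ 2 ∧ ∃ i : R, (s ^ 2 + g + s * κ') * (θ * i) = 1 := by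
    rcases h.mem_or_inv_mem (s ^ 2 + g + s * κ) with ⟨a, ha⟩ | ⟨i, hi⟩
    · rcases h.mem_or_inv_mem (s ^ 2 + g + s * (-κ)) with ⟨b, hb⟩ | ⟨i, hi⟩
      · exfalso
        refine h.one_ne (θ * e * (a + b - 5 * d)) (Subtype.ext ?_)
        push_cast
        linear_combination -hXi + (θ ^ 2 * e : K) * (hX + ha + hb)
      · exact ⟨-κ, by rw [hκ]; ring, i, hi⟩
    · exact ⟨κ, by rw [hκ]; ring, i, hi⟩
  obtain ⟨r, hr⟩ : ∃ r, r = s ^ 2 + g + s * κ := ⟨_, rfl⟩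
  rw [← hr] at hi
  have hprod : r * (s ^ 2 + g - s * κ) = 5 * d ^ 2 := by
    rw [hr]; linear_combination hg + s ^ 2 * hκ - s ^ 2 * hX
  have hI : r * 1 = r * r * (θ * i) := by linear_combination -r * hi
  have hr' : s ^ 2 + g - s * κ = 5 * d ^ 2 * (θ * i) := by
    linear_combination (θ * i : K) * hprod - (s ^ 2 + g - s * κ) * hi
  have hκ2 : κ ^ 2 * (θ * i) = 1 - 5 * d * (θ * i) + 5 * d ^ 2 * (θ * i) ^ 2 := by
    linear_combination (θ * i : K) * (hX - hκ + hr' - hr) + hi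
  have hsκ : 1 - 5 * d ^ 2 * (θ * i) ^ 2 = 2 * s * κ * (θ * i) := by
    linear_combination (θ * i : K) * (hr' + hr) - hi
  obtain ⟨w, hw⟩ := h.exists_inv' (-5 * d * i + 5 * d ^ 2 * θ * i ^ 2)
  push_cast at hw
  have hrel : (θ * i : K) * (1 - 5 * d * (θ * i) + 5 * d ^ 2 * (θ * i) ^ 2) * (1 + θ ^ 11 * c) =
      θ ^ (n + 2) * (1 - 5 * d ^ 2 * (θ * i) ^ 2) ^ 2 := by
    rw [hsκ, ← hκ2, ← hx, hs]
    linear_combination (s ^ 2 * κ ^ 2 * (θ * i) ^ 2 * θ ^ (n + 2) * (θ ^ 5 + 2) : K) * h5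
  obtain ⟨e', he'⟩ : ∃ e' : R, (e' : K) =
      (1 + θ ^ 11 * c₁) * (1 - 5 * d ^ 2 * (θ * i) ^ 2) ^ 2 * (1 + θ * w) :=
    ⟨(1 + θ ^ 11 * c₁) * (1 - 5 * d ^ 2 * (θ * i) ^ 2) ^ 2 * (1 + θ * w), by push_cast; rfl⟩
  have hIe : (θ ^ (n + 2) * e' : K) = θ * i := by
    rw [he']
    linear_combination -(1 + θ ^ 11 * c₁ : K) * (1 + θ * w) * hrel + (θ * i : K) *
      (1 + θ ^ 11 * c) * (1 + θ ^ 11 * c₁) * hw + (θ * i : K) * hc₁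
  refine ⟨r, κ * r, e', c₁, ?_, ?_, ?_⟩
  · linear_combination r ^ 3 * hκ2 - (r ^ 2 * κ ^ 2 + 5 * d * r ^ 2
      - 5 * d ^ 2 * r * (r * (θ * i) + 1)) * hi
  · rw [hIe, hi]
  · rw [hIe, he']
    linear_combination (1 + θ ^ 11 * c₁ : K) * (1 - 5 * d ^ 2 * (θ * i) ^ 2) ^ 2 * hw

omit [CharZero K] in
theorem isLocalSquare_of_descent {x : K} {e c : R} (hx : x * (θ ^ 2 * e) = 1)
    (he : (e * (1 - 5 * (θ - 1) * (θ ^ 2 * e) + 5 * (θ - 1) ^ 2 * (θ ^ 2 * e) ^ 2) : K) =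
      (1 + θ ^ 11 * c) * (1 - 5 * (θ - 1) ^ 2 * (θ ^ 2 * e) ^ 2) ^ 2) :
    IsLocalSquare R θ (-(θ ^ 3 + θ ^ 2 - 1) * x) := by
  have h5 := h.pow_five'
  obtain ⟨a, ha⟩ : ∃ a : R, (a : K) = -3 + 2 * θ - θ ^ 2 - θ ^ 3 - θ ^ 4 :=
    ⟨-3 + 2 * θ - θ ^ 2 - θ ^ 3 - θ ^ 4, by push_cast; rfl⟩
  have ha1 : (a * (1 - 5 * (θ - 1) * (θ ^ 2 * a) + 5 * (θ - 1) ^ 2 * (θ ^ 2 * a) ^ 2) : K) -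
      (1 - 5 * (θ - 1) ^ 2 * (θ ^ 2 * a) ^ 2) ^ 2 = θ ^ 11 *
        (12923 + 50746 * θ ^ 2 + 11452 * θ ^ 4 - 39269 * θ - 36109 * θ ^ 3) := by
    rw [ha]
    linear_combination (2 + 53 * θ ^ 3 + 277 * θ ^ 6 + 1254 * θ ^ 8 + 20988 * θ ^ 10
      + 27895 * θ ^ 12 + 6200 * θ ^ 14 + 4500 * θ ^ 16 + 250 * θ ^ 18 + 300 * θ ^ 20 - θ
      - 22 * θ ^ 2 - 32 * θ ^ 4 - 99 * θ ^ 5 - 341 * θ ^ 7 - 6866 * θ ^ 9 - 32530 * θ ^ 11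
      - 14355 * θ ^ 13 - 5850 * θ ^ 15 - 1350 * θ ^ 17 - 500 * θ ^ 19 - 25 * θ ^ 23 : K) * h5
  have ha2 : (-(θ ^ 3 + θ ^ 2 - 1) * a * (-1 - θ ^ 3 - θ ^ 4) ^ 2 : K) =
      1 + θ ^ 11 * (2 + θ + 7 * θ ^ 2 + 10 * θ ^ 3 + 6 * θ ^ 4) := by
    rw [ha]
    linear_combination (2 + 3 * θ ^ 3 + 2 * θ ^ 4 + 3 * θ ^ 7 - θ - θ ^ 2 - 4 * θ ^ 5 - 2 * θ ^ 6
      - 6 * θ ^ 9 - 5 * θ ^ 10 : K) * h5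
  obtain ⟨z, hz⟩ := h.exists_inv' (-5 * (θ - 1) * θ * (e + a)
    + 5 * (θ - 1) ^ 2 * θ ^ 3 * (e ^ 2 + e * a + a ^ 2) + 10 * (θ - 1) ^ 2 * θ ^ 3 * (e + a)
    - 25 * (θ - 1) ^ 4 * θ ^ 7 * (e + a) * (e ^ 2 + a ^ 2))
  obtain ⟨b, hb⟩ : ∃ b : R, (e : K) = a + θ ^ 11 * b := by
    refine ⟨(c * (1 - 5 * (θ - 1) ^ 2 * (θ ^ 2 * e) ^ 2) ^ 2 -
      (12923 + 50746 * θ ^ 2 + 11452 * θ ^ 4 - 39269 * θ - 36109 * θ ^ 3)) * (1 + θ * z), ?_⟩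
    push_cast at hz ⊢
    linear_combination (1 + θ * z : K) * (he - ha1) - (e - a : K) * hz
  refine h.isLocalSquare_of_eq (z := θ * e * (-1 - θ ^ 3 - θ ^ 4))
    (y := (2 + θ + 7 * θ ^ 2 + 10 * θ ^ 3 + 6 * θ ^ 4) -
      (θ ^ 3 + θ ^ 2 - 1) * b * (-1 - θ ^ 3 - θ ^ 4) ^ 2) ?_
  push_cast
  linear_combination ha2 - (θ ^ 3 + θ ^ 2 - 1) * (-1 - θ ^ 3 - θ ^ 4) ^ 2 * hb -
    (θ ^ 3 + θ ^ 2 - 1) * (-1 - θ ^ 3 - θ ^ 4) ^ 2 * e * hx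

theorem no_point
    (hE : ∀ x y : K, x ≠ 0 → y ^ 2 = x * (x ^ 2 - 5 * (θ - 1) * x + 5 * (θ - 1) ^ 2) →
      IsTame R θ 1 x ∧ IsTame R θ 1 (-(θ ^ 3 + θ ^ 2 - 1) * x) ∧
        ¬ IsSquare (-(θ ^ 3 + θ ^ 2 - 1) * x))
    (hE' : ∀ x y : K, x ≠ 0 → y ^ 2 = x * (x ^ 2 + 10 * (θ - 1) * x + 5 * (θ - 1) ^ 2) →
      IsTame R θ 1 x) (j : ℕ) {x y : K} {c : R}
    (hy : y ^ 2 = x * (x ^ 2 - 5 * (θ - 1) * x + 5 * (θ - 1) ^ 2)) :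
    x * θ ^ (10 * j + 12) ≠ 1 + θ ^ 11 * c := by
  intro hx
  induction j generalizing x y c with
  | zero =>
    obtain ⟨x', y', e, c', hy', hx', he⟩ := h.descent (θ - 1) (fun x y h0 h1 =>
      (hE x y h0 (by push_cast at h1; exact h1)).1)
      (fun x y h0 h1 => (hE' x y h0 (by push_cast at h1; exact h1))) hx
        (by push_cast; exact hy)
    push_cast at hx' hy' he
    obtain ⟨-, h2, h3⟩ := hE x' y' (left_ne_zero_of_mul_eq_one hx') hy'
    exact h3 (h.isSquare_of_isTame h2 (h.isLocalSquare_of_descent (by simpa using hx')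
      (by simpa using he)))
  | succ j ih =>
    obtain ⟨x', y', e, c', hy', hx', he⟩ := h.descent (θ - 1) (fun x y h0 h1 =>
      (hE x y h0 (by push_cast at h1; exact h1)).1)
      (fun x y h0 h1 => (hE' x y h0 (by push_cast at h1; exact h1)))
      (n := 10 * j + 10) hx (by push_cast; exact hy)
    push_cast at hx' hy' he
    obtain ⟨a, ha⟩ : ∃ a : R, (e : K) = 1 + θ ^ 11 * a := by
      obtain ⟨t, ht⟩ : ∃ t : R, (t : K) = (θ - 1) * (θ ^ (10 * j) * e) :=
        ⟨(θ - 1) * (θ ^ (10 * j) * e), by push_cast; rfl⟩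
      have ht' : (θ - 1) * (θ ^ (10 * j + 10 + 2) * e) = (θ ^ 12 * t : K) := by rw [ht]; ring
      refine ⟨c' * (1 - 5 * (θ ^ 12 * t) ^ 2) ^ 2 + (-10 * θ * t * (θ ^ 12 * t) +
        25 * (θ * t) * (θ ^ 12 * t) ^ 3) + 5 * e * (θ * t) - 5 * e * (θ * t) * (θ ^ 12 * t), ?_⟩
      push_cast
      have he' : (e * (1 - 5 * (θ ^ 12 * t) + 5 * (θ ^ 12 * t) ^ 2) : K) =
          (1 + θ ^ 11 * c') * (1 - 5 * (θ ^ 12 * t) ^ 2) ^ 2 := by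
        rw [← ht']; linear_combination he
      linear_combination he'
    obtain ⟨b, hb⟩ := h.exists_inv_one_add 10 a
    norm_num at hb
    refine ih hy' (c := b) ?_
    rw [ha] at hx'
    linear_combination (1 + θ ^ 11 * b : K) * hx' - (x' * θ ^ (10 * j + 12) : K) * hb

omit h [CharZero K] in
theorem _root_.HasDefect.pow_mul {i k : ℕ} (hk : Odd k) {x y : K} (hx : HasDefect R θ i x)
    (hx0 : x ≠ 0) (hy : IsTame R θ (i + 1) y) (hy0 : y ≠ 0) : HasDefect R θ i (x ^ k * y) := by
  obtain ⟨m, rfl⟩ := hk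
  have hxy : HasDefect R θ i (x * y) := by
    rcases hy with ⟨s, rfl⟩ | ⟨j, hj, -, hy⟩
    · rw [← sq]
      exact hx.mul_sq (by rintro rfl; simp at hy0)
    · exact hx.mul hj hy
  convert hxy.mul_sq (pow_ne_zero m hx0) using 1
  ring

omit h [CharZero K] in
theorem _root_.IsTame.pow_mul {i : ℕ} (hi : i = 1 ∨ i = 3 ∨ i = 5 ∨ i = 10) {x y : K}
    (hx : HasDefect R θ i x) (hx0 : x ≠ 0) {j : ℕ} (hij : i < j) (hy : IsTame R θ j y)
    (hy0 : y ≠ 0) (k : ℕ) : IsTame R θ i (x ^ k * y) := by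
  rcases Nat.even_or_odd k with ⟨m, rfl⟩ | hk
  · convert (hy.mono hij.le).mul_sq (pow_ne_zero m hx0) using 1
    ring
  · exact .inr ⟨i, le_rfl, hi, hx.pow_mul hk hx0 (hy.mono hij) hy0⟩

omit [CharZero K] in
theorem sub_one_ne_zero : (θ - 1 : K) ≠ 0 :=
  left_ne_zero_of_mul_eq_one (b := (1 + θ + θ ^ 2 + θ ^ 3 + θ ^ 4 : K))
    (by linear_combination h.pow_five')

omit [CharZero K] in
theorem cube_add_sq_sub_one_ne_zero : (θ ^ 3 + θ ^ 2 - 1 : K) ≠ 0 :=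
  left_ne_zero_of_mul_eq_one (b := (-1 + θ ^ 2 - θ ^ 3 + θ ^ 4 : K))
    (by linear_combination (θ ^ 2 : K) * h.pow_five')

omit [CharZero K] in
theorem one_add_sq_ne_zero : (1 + θ ^ 2 : K) ≠ 0 := by
  simpa [sq] using h.unit_ne_zero θ

/-- `x` is a product of powers of `-1`, `t - 1`, `t ^ 3 + t ^ 2 - 1`, `1 + t ^ 2` and a nonzero
square. -/
def _root_.IsGenerated (t x : K) : Prop :=
  ∃ a b c k : ℕ, ∃ s : K, s ≠ 0 ∧
    x = (t - 1) ^ b * ((t ^ 3 + t ^ 2 - 1) ^ c * ((-1) ^ a * ((1 + t ^ 2) ^ k * s ^ 2)))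

omit h [CharZero K] in
theorem _root_.IsGenerated.mul {t x y : K} (hx : IsGenerated t x) (hy : IsGenerated t y) :
    IsGenerated t (x * y) := by
  obtain ⟨a, b, c, k, s, hs, rfl⟩ := hx
  obtain ⟨a', b', c', k', s', hs', rfl⟩ := hy
  exact ⟨a + a', b + b', c + c', k + k', s * s', mul_ne_zero hs hs', by ring⟩

theorem isTame_of_isGenerated {x : K} (hx : IsGenerated (θ : K) x) : IsTame R θ 1 x := by
  obtain ⟨a, b, c, k, s, hs, rfl⟩ := hx
  have h1 := h.sub_one_ne_zero
  have h2 := h.cube_add_sq_sub_one_ne_zero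
  have h3 := h.one_add_sq_ne_zero
  have ts : IsTame R θ 11 (s ^ 2) := .inl (.sq s)
  have n10 := mul_ne_zero (pow_ne_zero k h3) (pow_ne_zero 2 hs)
  have n5 := mul_ne_zero (pow_ne_zero a (neg_ne_zero.mpr (one_ne_zero (α := K)))) n10
  have n3 := mul_ne_zero (pow_ne_zero c h2) n5
  have t10 := IsTame.pow_mul (by simp) h.hasDefect_one_add_sq h3 (by norm_num) ts
    (pow_ne_zero 2 hs) k
  have t5 := IsTame.pow_mul (by simp) h.hasDefect_neg_one (by norm_num) (by norm_num) t10 n10 a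
  have t3 := IsTame.pow_mul (by simp) h.hasDefect_cube_add_sq_sub_one h2 (by norm_num) t5 n5 c
  exact IsTame.pow_mul (by simp) h.hasDefect_sub_one h1 (by norm_num) t3 n3 b

theorem even_of_isSquare {a b c : ℕ}
    (hsq : IsSquare ((θ - 1 : K) ^ b * ((θ ^ 3 + θ ^ 2 - 1) ^ c * (-1) ^ a))) :
    Even a ∧ Even b ∧ Even c := by
  have h1 := h.sub_one_ne_zero
  have h2 := h.cube_add_sq_sub_one_ne_zero
  have n5 := pow_ne_zero a (neg_ne_zero.mpr (one_ne_zero (α := K)))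
  have n3 := mul_ne_zero (pow_ne_zero c h2) n5
  have t1 : IsTame R θ 11 (1 : K) := .inl .one
  have t5 := IsTame.pow_mul (by simp) h.hasDefect_neg_one (by norm_num) (by norm_num) t1
    one_ne_zero a
  rw [mul_one] at t5
  have t3 := IsTame.pow_mul (by simp) h.hasDefect_cube_add_sq_sub_one h2 (by norm_num) t5 n5 c
  have hb : Even b := by
    by_contra hb
    exact h.not_isSquare (by decide) (h.hasDefect_sub_one.pow_mul (by simpa using hb) h1
      (t3.mono (by norm_num)) n3) hsq
  have hsq' : IsSquare ((θ ^ 3 + θ ^ 2 - 1 : K) ^ c * (-1) ^ a) := by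
    have := hsq.div (hb.isSquare_pow (θ - 1 : K))
    rwa [mul_div_cancel_left₀ _ (pow_ne_zero b h1)] at this
  have hc : Even c := by
    by_contra hc
    exact h.not_isSquare (by decide) (h.hasDefect_cube_add_sq_sub_one.pow_mul (by simpa using hc)
      h2 (t5.mono (by norm_num)) n5) hsq'
  have hsq'' : IsSquare ((-1 : K) ^ a) := by
    have := hsq'.div (hc.isSquare_pow (θ ^ 3 + θ ^ 2 - 1 : K))
    rwa [mul_div_cancel_left₀ _ (pow_ne_zero c h2)] at this
  refine ⟨?_, hb, hc⟩
  by_contra ha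
  rw [Nat.not_even_iff_odd] at ha
  rw [ha.neg_one_pow] at hsq''
  exact h.not_isSquare (by decide) h.hasDefect_neg_one hsq''

omit h [CharZero K] in
theorem _root_.exists_weierstrass {d t t₀ V V₀ : K}
    (e : V ^ 2 = d * (t ^ 4 + t ^ 3 + t ^ 2 + t + 1))
    (e₀ : V₀ ^ 2 = d * (t₀ ^ 4 + t₀ ^ 3 + t₀ ^ 2 + t₀ + 1)) (hu : t - t₀ ≠ 0) :
    ∃ x y : K, x * (t - t₀) ^ 2 = 2 * V * V₀ + d * (2 * t ^ 2 * t₀ ^ 2 + t * t₀ * (t + t₀)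
      + 2 * (t ^ 2 + t₀ ^ 2) - 2 * t * t₀ + (t + t₀) + 2) ∧
      y ^ 2 = x * (x ^ 2 - 5 * d * x + 5 * d ^ 2) := by
  obtain ⟨G, hG⟩ : ∃ G, G = 2 * t ^ 2 * t₀ ^ 2 + t * t₀ * (t + t₀) + 2 * (t ^ 2 + t₀ ^ 2)
    - 2 * t * t₀ + (t + t₀) + 2 := ⟨_, rfl⟩
  obtain ⟨u, ht⟩ : ∃ u, t = t₀ + u := ⟨t - t₀, by ring⟩
  have hu' : t - t₀ = u := by rw [ht]; ring
  rw [hu'] at hu ⊢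
  obtain ⟨A, hA⟩ : ∃ A, A = 4 * (t₀ ^ 4 + t₀ ^ 3 + t₀ ^ 2 + t₀ + 1)
    + (4 * t₀ ^ 3 + 3 * t₀ ^ 2 + 2 * t₀ + 1) * u := ⟨_, rfl⟩
  obtain ⟨B, hB⟩ : ∃ B, B = 4 * (t ^ 4 + t ^ 3 + t ^ 2 + t + 1)
    - (4 * t ^ 3 + 3 * t ^ 2 + 2 * t + 1) * u := ⟨_, rfl⟩
  have key : (d * (V * A + V₀ * B)) ^ 2 = (2 * V * V₀ + d * G) *
      ((2 * V * V₀ + d * G) ^ 2 - 5 * d * u ^ 2 * (2 * V * V₀ + d * G) + 5 * d ^ 2 * u ^ 4) := by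
    have k : (d * (V * A + V₀ * B)) ^ 2 - (2 * V * V₀ + d * G) *
        ((2 * V * V₀ + d * G) ^ 2 - 5 * d * u ^ 2 * (2 * V * V₀ + d * G) + 5 * d ^ 2 * u ^ 4) =
        d ^ 3 * ((t ^ 4 + t ^ 3 + t ^ 2 + t + 1) * A ^ 2
          + (t₀ ^ 4 + t₀ ^ 3 + t₀ ^ 2 + t₀ + 1) * B ^ 2
          - (12 * G - 20 * u ^ 2) * (t ^ 4 + t ^ 3 + t ^ 2 + t + 1)
            * (t₀ ^ 4 + t₀ ^ 3 + t₀ ^ 2 + t₀ + 1)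
          - G ^ 3 + 5 * u ^ 2 * G ^ 2 - 5 * u ^ 4 * G) +
        2 * V * V₀ * d ^ 2 * (A * B - 4 * (t ^ 4 + t ^ 3 + t ^ 2 + t + 1)
            * (t₀ ^ 4 + t₀ ^ 3 + t₀ ^ 2 + t₀ + 1) - 3 * G ^ 2 + 10 * u ^ 2 * G - 5 * u ^ 4) := by
      linear_combination
        (d ^ 2 * A ^ 2 - (8 * V * V₀ + 12 * d * G - 20 * d * u ^ 2) * V₀ ^ 2) * e +
        (d ^ 2 * B ^ 2 - (8 * V * V₀ + 12 * d * G - 20 * d * u ^ 2) *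
          (d * (t ^ 4 + t ^ 3 + t ^ 2 + t + 1))) * e₀
    have k1 : A * B - 4 * (t ^ 4 + t ^ 3 + t ^ 2 + t + 1)
        * (t₀ ^ 4 + t₀ ^ 3 + t₀ ^ 2 + t₀ + 1) - 3 * G ^ 2 + 10 * u ^ 2 * G - 5 * u ^ 4 = 0 := by
      rw [hA, hB, hG, ht]; ring
    have k2 : (t ^ 4 + t ^ 3 + t ^ 2 + t + 1) * A ^ 2
        + (t₀ ^ 4 + t₀ ^ 3 + t₀ ^ 2 + t₀ + 1) * B ^ 2
        - (12 * G - 20 * u ^ 2) * (t ^ 4 + t ^ 3 + t ^ 2 + t + 1)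
          * (t₀ ^ 4 + t₀ ^ 3 + t₀ ^ 2 + t₀ + 1)
        - G ^ 3 + 5 * u ^ 2 * G ^ 2 - 5 * u ^ 4 * G = 0 := by
      rw [hA, hB, hG, ht]; ring
    linear_combination k + d ^ 3 * k2 + 2 * V * V₀ * d ^ 2 * k1
  rw [← hG]
  refine ⟨(2 * V * V₀ + d * G) / u ^ 2, d * (V * A + V₀ * B) / u ^ 3, by field_simp, ?_⟩
  rw [div_pow, key]
  field_simp

theorem exists_point (n : ℕ) {d t₀ V₀ v w w' : R} {t V : K}
    (e₀ : (V₀ ^ 2 : K) = d * (t₀ ^ 4 + t₀ ^ 3 + t₀ ^ 2 + t₀ + 1))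
    (hv : (V₀ ^ 2 : K) = 1 + θ ^ 11 * v) (hw : (w ^ 2 : K) = 1 + θ ^ 11 * w')
    (ht : t = t₀ + θ ^ (5 * n + 16) * w) (e : V ^ 2 = d * (t ^ 4 + t ^ 3 + t ^ 2 + t + 1)) :
    ∃ x y : K, ∃ c : R, y ^ 2 = x * (x ^ 2 - 5 * d * x + 5 * d ^ 2) ∧
      x * θ ^ (10 * (n + 1) + 12) = 1 + θ ^ 11 * c := by
  have h0 := h.ne_zero
  have h5 := h.pow_five'
  obtain ⟨i, hi⟩ := h.exists_inv_one_add 10 v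
  norm_num at hi
  obtain ⟨f, hf⟩ : ∃ f : R, ∃ σ : K, σ ^ 2 = 1 ∧ σ * V = V₀ * (1 + θ ^ 11 * f) := by
    obtain ⟨u, hu⟩ : ∃ u : R, (u : K) = θ ^ (5 * n + 16) * w :=
      ⟨θ ^ (5 * n + 16) * w, by push_cast; rfl⟩
    have hσ : (V * (V₀ * (1 + θ ^ 11 * i))) ^ 2 = 1 + θ ^ (10 + 6) *
        ((θ ^ (5 * n) * w * d * ((4 * t₀ ^ 3 + 3 * t₀ ^ 2 + 2 * t₀ + 1)
          + (6 * t₀ ^ 2 + 3 * t₀ + 1) * u + (4 * t₀ + 1) * u ^ 2 + u ^ 3) *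
          (V₀ * (1 + θ ^ 11 * i)) ^ 2 : R) : K) := by
      have e1 : V ^ 2 = V₀ ^ 2 + d * u * ((4 * t₀ ^ 3 + 3 * t₀ ^ 2 + 2 * t₀ + 1)
          + (6 * t₀ ^ 2 + 3 * t₀ + 1) * u + (4 * t₀ + 1) * u ^ 2 + u ^ 3) := by
        rw [e, e₀, ht, hu]; ring
      have e2 : (V₀ ^ 2 * (1 + θ ^ 11 * i) : K) = 1 := by rw [hv, hi]
      push_cast
      linear_combination (V₀ * (1 + θ ^ 11 * i) : K) ^ 2 * e1 +
        (V₀ ^ 2 * (1 + θ ^ 11 * i) + 1 : K) * e2 + (V₀ * (1 + θ ^ 11 * i)) ^ 2 * d *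
        ((4 * t₀ ^ 3 + 3 * t₀ ^ 2 + 2 * t₀ + 1)
          + (6 * t₀ ^ 2 + 3 * t₀ + 1) * u + (4 * t₀ + 1) * u ^ 2 + u ^ 3) * hu
    obtain ⟨f, hf | hf⟩ := h.sqrt_one_add hσ
    · exact ⟨f, 1, one_pow 2, by linear_combination V₀ * hf - V * hi - V * (1 + θ ^ 11 * i) * hv⟩
    · exact ⟨f, -1, by norm_num,
        by linear_combination -V₀ * hf + V * hi + V * (1 + θ ^ 11 * i) * hv⟩
  obtain ⟨σ, hσ, hf⟩ := hf
  have hu : t - t₀ = θ ^ (5 * n + 16) * w := by rw [ht]; ring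
  have hw0 : (w : K) ≠ 0 := by
    intro hw0
    refine h.unit_ne_zero (θ ^ 10 * w') ?_
    push_cast
    rw [hw0] at hw
    linear_combination -hw
  obtain ⟨x, y, hx, hy⟩ := exists_weierstrass (t := t) (t₀ := t₀) (V := σ * V)
    (V₀ := V₀) (by rw [mul_pow, hσ, one_mul, e]) e₀
    (by rw [hu]; exact mul_ne_zero (pow_ne_zero _ h0) hw0)
  obtain ⟨z, hz⟩ := h.exists_inv_one_add 10 w'
  norm_num at hz
  obtain ⟨k, hk⟩ : ∃ k : R, (k : K) = v
      + d * (4 * t₀ ^ 3 + 3 * t₀ ^ 2 + 2 * t₀ + 1) * θ ^ (5 * n) * w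
      + θ ^ (10 * n + 11) * w ^ 2 * d * (8 * t₀ ^ 2 + 4 * t₀ + 3
        + (4 * t₀ + 1) * (θ ^ (5 * n + 16) * w) + (θ ^ (5 * n + 16) * w) ^ 2)
      - V₀ ^ 2 * θ * f ^ 2 :=
    ⟨v + d * (4 * t₀ ^ 3 + 3 * t₀ ^ 2 + 2 * t₀ + 1) * θ ^ (5 * n) * w
      + θ ^ (10 * n + 11) * w ^ 2 * d * (8 * t₀ ^ 2 + 4 * t₀ + 3
        + (4 * t₀ + 1) * (θ ^ (5 * n + 16) * w) + (θ ^ (5 * n + 16) * w) ^ 2)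
      - V₀ ^ 2 * θ * f ^ 2, by push_cast; rfl⟩
  have hxk : x * θ ^ (10 * (n + 1) + 12) * w ^ 2 = 1 + θ ^ 11 * k := by
    have hV : (2 * (σ * V) * V₀ : K) = d * (t ^ 4 + t ^ 3 + t ^ 2 + t + 1) +
        d * (t₀ ^ 4 + t₀ ^ 3 + t₀ ^ 2 + t₀ + 1) - (V₀ * (θ ^ 11 * f)) ^ 2 := by
      linear_combination V ^ 2 * hσ + e + e₀ - (σ * V - V₀ + V₀ * (θ ^ 11 * f)) * hf
    have hx' : x * (θ ^ (5 * n + 16) * w) ^ 2 = 4 * V₀ ^ 2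
        + 2 * d * (4 * t₀ ^ 3 + 3 * t₀ ^ 2 + 2 * t₀ + 1) * (θ ^ (5 * n + 16) * w)
        + (θ ^ (5 * n + 16) * w) ^ 2 * d * (8 * t₀ ^ 2 + 4 * t₀ + 3
          + (4 * t₀ + 1) * (θ ^ (5 * n + 16) * w) + (θ ^ (5 * n + 16) * w) ^ 2)
        - (V₀ * (θ ^ 11 * f)) ^ 2 := by
      rw [← hu, hx, hV, e₀]; ring
    refine mul_left_cancel₀ (pow_ne_zero 10 h0) ?_
    rw [hk]
    linear_combination hx' + θ ^ 10 * hv - (V₀ ^ 2 * (θ ^ 5 + 2)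
      + d * (4 * t₀ ^ 3 + 3 * t₀ ^ 2 + 2 * t₀ + 1) * (θ ^ (5 * n + 16) * w)) * h5
  refine ⟨x, y, k + z * (1 + θ ^ 11 * k), hy, ?_⟩
  push_cast
  linear_combination (1 + θ ^ 11 * z : K) * hxk - x * θ ^ (10 * (n + 1) + 12) * hz
    - (1 + θ ^ 11 * z : K) * x * θ ^ (10 * (n + 1) + 12) * hw

omit [CharZero K] in
theorem exists_sq_eq_of_odd {o k : ℤ} (ho : Odd o) (hk : Odd k) :
    ∃ w w' : R, (w * k : K) = o ∧ (w ^ 2 : K) = 1 + θ ^ 11 * w' := by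
  obtain ⟨s, hs⟩ : (8 : ℤ) ∣ o ^ 2 - k ^ 2 := by
    have h1 := Int.eight_dvd_sq_sub_one_of_odd ho
    have h2 := Int.eight_dvd_sq_sub_one_of_odd hk
    lia
  obtain ⟨r, rfl⟩ := hk
  obtain ⟨z, hz⟩ := h.exists_inv_one_add 4 r
  have h5 := h.pow_five'
  have hs' : (o ^ 2 - (2 * r + 1) ^ 2 : K) = 8 * s := by
    exact_mod_cast congrArg (Int.cast (R := K)) hs
  norm_num at hz
  refine ⟨o * (1 + θ ^ 5 * z), θ ^ 4 * s * (1 + θ ^ 5 * z) ^ 2, ?_, ?_⟩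
  · push_cast
    linear_combination (o : K) * hz - (o : K) * (1 + θ ^ 5 * z) * r * h5
  · push_cast
    linear_combination (1 + θ ^ 5 * z : K) ^ 2 * hs' +
      ((1 + θ ^ 5 * r : K) * (1 + θ ^ 5 * z) + 1) * hz
      - (1 + θ ^ 5 * z : K) ^ 2 * ((2 * r + 1) + (1 + θ ^ 5 * r)) * r * h5
      - (1 + θ ^ 5 * z : K) ^ 2 * s * (θ ^ 10 + 2 * θ ^ 5 + 4) * h5

end

end IsTwoAdic

end Local

section NumberField

variable {K : Type*} [Field K] [NumberField K]

/-- An algebraic integer whose norm is a prime number is prime. -/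
theorem prime_of_prime_norm {g : 𝓞 K} (hn : (Algebra.norm ℤ g).natAbs.Prime) : Prime g := by
  have hg : g ≠ 0 := by
    rintro rfl
    simp [Algebra.norm_zero] at hn
    exact absurd hn (by norm_num)
  rw [← Ideal.span_singleton_prime hg]
  exact Ideal.isPrime_of_irreducible_absNorm (by rw [Ideal.absNorm_span_singleton]; exact hn)

theorem dvd_or_dvd_sub_one_of_norm_eq_two {g : 𝓞 K} (hn : (Algebra.norm ℤ g).natAbs = 2)
    (x : 𝓞 K) : g ∣ x ∨ g ∣ x - 1 := by
  have hp : Prime g := prime_of_prime_norm (by rw [hn]; exact Nat.prime_two)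
  have hcard : Nat.card (𝓞 K ⧸ Ideal.span {g}) = 2 := by
    rw [← hn, ← Ideal.absNorm_span_singleton]
    rfl
  simp only [← Ideal.mem_span_singleton, ← Ideal.Quotient.eq_zero_iff_mem, map_sub, map_one,
    sub_eq_zero]
  obtain ⟨y, -, hy⟩ := (Nat.card_eq_two_iff' (0 : 𝓞 K ⧸ Ideal.span {g})).mp hcard
  have h1 : (1 : 𝓞 K ⧸ Ideal.span {g}) ≠ 0 := by
    rw [← map_one (Ideal.Quotient.mk _), Ne, Ideal.Quotient.eq_zero_iff_mem,
      Ideal.mem_span_singleton]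
    exact hp.not_dvd_one
  by_cases hx : Ideal.Quotient.mk (Ideal.span {g}) x = 0
  · exact .inl hx
  · exact .inr ((hy _ hx).trans (hy _ h1).symm)

theorem exists_isTwoAdic (hK : finrank ℚ K = 5) {θ : 𝓞 K} (hθ : θ ^ 5 = 2) :
    ∃ R : Subring K, ∃ τ : R, (τ : K) = θ ∧ IsTwoAdic R τ := by
  have hn : (Algebra.norm ℤ θ).natAbs = 2 := by rw [norm_theta hK hθ]; rfl
  have hp : Prime θ := prime_of_prime_norm (by rw [hn]; exact Nat.prime_two)
  have hθ0 : (θ : K) ≠ 0 := by exact_mod_cast hp.ne_zero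
  let P : Ideal (𝓞 K) := Ideal.span {θ}
  have hP : P.IsPrime := (Ideal.span_singleton_prime hp.ne_zero).mpr hp
  let R : Subring K := (Localization.subalgebra.ofField K P.primeCompl
    P.primeCompl_le_nonZeroDivisors).toSubring
  have mem_R (x : K) : x ∈ R ↔ ∃ a s : 𝓞 K, ¬ θ ∣ s ∧ x = a * (s : K)⁻¹ := by
    simp only [← Ideal.mem_span_singleton]
    change (∃ a s, ∃ _ : s ∈ P.primeCompl, _) ↔ _
    simp only [exists_prop]
    rfl
  have ne_zero {s : 𝓞 K} (hs : ¬ θ ∣ s) : (s : K) ≠ 0 := by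
    rintro h
    exact hs (by simp [show s = 0 by exact_mod_cast h])
  have unit {s : 𝓞 K} (hs : ¬ θ ∣ s) : ∃ t : 𝓞 K, s = 1 + θ * t := by
    obtain ⟨t, ht⟩ := (dvd_or_dvd_sub_one_of_norm_eq_two hn s).resolve_left hs
    exact ⟨t, by linear_combination ht⟩
  have not_dvd (t : 𝓞 K) : ¬ θ ∣ 1 + θ * t := fun h =>
    hp.not_dvd_one ((dvd_add_left (dvd_mul_right θ t)).mp h)
  have θ_mem : (θ : K) ∈ R := (mem_R θ).mpr ⟨θ, 1, hp.not_dvd_one, by simp⟩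
  have shape {a s : 𝓞 K} (ha : ¬ θ ∣ a) (hs : ¬ θ ∣ s) :
      ∃ y : R, (a * (s : K)⁻¹ : K) = 1 + θ * y := by
    obtain ⟨b, hb⟩ := unit ha
    obtain ⟨t, ht⟩ := unit hs
    refine ⟨⟨((b - t : 𝓞 K) : K) * (s : K)⁻¹, (mem_R _).mpr ⟨_, _, hs, rfl⟩⟩, ?_⟩
    have := ne_zero hs
    have hb' : (a : K) = 1 + θ * b := by rw [hb]; push_cast; rfl
    have ht' : (s : K) = 1 + θ * t := by rw [ht]; push_cast; rfl
    push_cast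
    field_simp
    linear_combination hb' - ht'
  refine ⟨R, ⟨θ, θ_mem⟩, rfl, ?_, ?_, ?_, ?_, ?_⟩
  · exact Subtype.ext (by
      simpa using (congrArg (algebraMap (𝓞 K) K) hθ).trans (map_ofNat (algebraMap (𝓞 K) K) 2))
  · rintro ⟨x, hx⟩
    obtain ⟨a, s, hs, rfl⟩ := (mem_R x).mp hx
    by_cases ha : θ ∣ a
    · obtain ⟨b, rfl⟩ := ha
      exact .inl ⟨⟨b * (s : K)⁻¹, (mem_R _).mpr ⟨_, _, hs, rfl⟩⟩,
        Subtype.ext (by push_cast; ring)⟩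
    · obtain ⟨y, hy⟩ := shape ha hs
      exact .inr ⟨y, Subtype.ext (by push_cast; exact hy)⟩
  · rintro ⟨y, hy⟩ h
    obtain ⟨a, s, hs, rfl⟩ := (mem_R y).mp hy
    have := ne_zero hs
    have h' : (1 : K) = θ * (a * (s : K)⁻¹) := congrArg Subtype.val h
    field_simp at h'
    exact hs ⟨a, by exact_mod_cast h'⟩
  · rintro ⟨y, hy⟩
    obtain ⟨a, s, hs, rfl⟩ := (mem_R y).mp hy
    have hs0 := ne_zero hs
    have hsa : ¬ θ ∣ s + θ * a := fun h => hs ((dvd_add_left (dvd_mul_right θ a)).mp h)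
    obtain ⟨z, hz⟩ := shape hs hsa
    have hsa0 := ne_zero hsa
    refine ⟨z, Subtype.ext ?_⟩
    push_cast at hz hsa0 ⊢
    rw [← hz]
    field_simp
  · intro x hx
    obtain ⟨a, s, hs, rfl⟩ := IsFractionRing.div_surjective (A := 𝓞 K) x
    have ha : a ≠ 0 := by rintro rfl; simp at hx
    obtain ⟨b, hb, hb'⟩ :=
      (FiniteMultiplicity.of_prime_left hp ha).exists_eq_pow_mul_and_not_dvd
    obtain ⟨t, ht, ht'⟩ := (FiniteMultiplicity.of_prime_left hp
      (nonZeroDivisors.ne_zero hs)).exists_eq_pow_mul_and_not_dvd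
    obtain ⟨y, hy⟩ := shape hb' ht'
    refine ⟨multiplicity θ a - multiplicity θ s, y, ?_⟩
    have := ne_zero ht'
    generalize multiplicity θ a = m, multiplicity θ s = n at *
    change _ = (θ : K) ^ ((m : ℤ) - n) * (1 + θ * y)
    rw [← hy, zpow_sub₀ hθ0, hb, ht]
    push_cast
    simp only [zpow_natCast]
    field_simp

theorem exists_eq_mul_sq {ι : Type*} [Finite ι] {F : ι → (𝓞 K)ˣ}
    (hF : ∀ i j, IsSquare (F i * F j) → i = j)
    (hcard : Units.torsionOrder K * 2 ^ Units.rank K ≤ Nat.card ι) (ε : (𝓞 K)ˣ) :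
    ∃ i η, ε = F i * η ^ 2 := by
  choose e he using fun x : (𝓞 K)ˣ => (Units.exist_unique_eq_mul_prod K x).exists
  let g (x : (𝓞 K)ˣ) : Units.torsion K × (Fin (Units.rank K) → ZMod 2) :=
    ((e x).1, fun i => (e x).2 i)
  have hg {x y : (𝓞 K)ˣ} (hxy : g x = g y) : IsSquare (x * y) := by
    have h1 : (e x).1 = (e y).1 := (Prod.mk.inj hxy).1
    have h2 (i) : Even ((e x).2 i + (e y).2 i) := by
      have : (((e x).2 i : ℤ) : ZMod 2) = (e y).2 i := congrFun (Prod.mk.inj hxy).2 i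
      rw [ZMod.intCast_eq_intCast_iff_dvd_sub] at this
      push_cast at this
      grind
    rw [he x, he y, h1, mul_mul_mul_comm, ← Finset.prod_mul_distrib]
    refine .mul ⟨_, rfl⟩ (Finset.isSquare_prod _ fun i _ => ?_)
    rw [← zpow_add]
    exact (h2 i).isSquare_zpow _
  have hinj : Function.Injective (g ∘ F) := fun i j hij => hF i j (hg hij)
  obtain ⟨i, hi⟩ := (hinj.bijective_of_nat_card_le (by
    simpa [Nat.card_prod, Units.torsionOrder] using hcard)).surjective (g ε)
  obtain ⟨η, hη⟩ := hg hi
  refine ⟨i, η * (F i)⁻¹, ?_⟩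
  rw [eq_comm, mul_pow, sq η, ← hη, inv_pow, sq (F i), mul_inv]
  simp [mul_assoc, mul_left_comm, mul_comm]

theorem isGenerated_unit (hK : finrank ℚ K = 5) {θ : 𝓞 K} (hθ : θ ^ 5 = 2) (ε : (𝓞 K)ˣ) :
    IsGenerated (θ : K) (ε : 𝓞 K) := by
  obtain ⟨R, τ, hτ, h⟩ := exists_isTwoAdic hK hθ
  let u₁ : (𝓞 K)ˣ := .mkOfMulEqOne (θ - 1) (1 + θ + θ ^ 2 + θ ^ 3 + θ ^ 4)
    (by linear_combination hθ)
  let u₂ : (𝓞 K)ˣ := .mkOfMulEqOne (θ ^ 3 + θ ^ 2 - 1) (-1 + θ ^ 2 - θ ^ 3 + θ ^ 4)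
    (by linear_combination θ ^ 2 * hθ)
  have h1 : ((u₁ : 𝓞 K) : K) = τ - 1 := by simp [u₁, hτ]
  have h2 : ((u₂ : 𝓞 K) : K) = τ ^ 3 + τ ^ 2 - 1 := by simp [u₂, hτ]
  let F (i : Fin 2 × Fin 2 × Fin 2) : (𝓞 K)ˣ :=
    u₁ ^ (i.1 : ℕ) * (u₂ ^ (i.2.1 : ℕ) * (-1) ^ (i.2.2 : ℕ))
  have hF (i j) (hij : IsSquare (F i * F j)) : i = j := by
    let φ : (𝓞 K)ˣ →* K := (algebraMap (𝓞 K) K : 𝓞 K →* K).comp (Units.coeHom (𝓞 K))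
    have e : (τ - 1 : K) ^ (i.1 + j.1 : ℕ) * ((τ ^ 3 + τ ^ 2 - 1) ^ (i.2.1 + j.2.1 : ℕ) *
        (-1) ^ (i.2.2 + j.2.2 : ℕ)) = φ (F i * F j) := by
      simp [φ, F, h1, h2]
      ring
    have := h.even_of_isSquare (e ▸ hij.map φ)
    obtain ⟨i1, i2, i3⟩ := i
    obtain ⟨j1, j2, j3⟩ := j
    simp only [Prod.mk.injEq, Fin.ext_iff]
    grind
  obtain ⟨i, η, rfl⟩ := exists_eq_mul_sq hF (by
    rw [Units.torsionOrder_eq_two_of_odd_finrank (by rw [hK]; decide), unitsRank_eq_two hK hθ]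
    simp) ε
  refine ⟨i.2.2, i.1, i.2.1, 0, ((η : 𝓞 K) : K), by simp, ?_⟩
  simp [F, h1, h2, ← hτ]
  ring

theorem isGenerated_of_mul_eq_sq (hK : finrank ℚ K = 5) {θ : 𝓞 K} (hθ : θ ^ 5 = 2)
    {m q w : 𝓞 K} (hm : m ≠ 0) (e : m * q = w ^ 2)
    (hp : ∀ p : 𝓞 K, Prime p → p ∣ m → p ∣ q → p ∣ 5) : IsGenerated (θ : K) m := by
  have := isPrincipalIdealRing_of_pow_five_eq_two hK hθ
  have hπ : Prime (1 + θ ^ 2) := prime_of_prime_norm (by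
    rw [norm_one_add_theta_sq hK hθ]; exact Nat.prime_five)
  have h5 (p : 𝓞 K) (h : Prime p) (hp5 : p ∣ 5) : 1 + θ ^ 2 ∣ p := by
    have : (5 : 𝓞 K) =
        (1 + θ ^ 2) ^ 5 * (-3 - 6 * θ - θ ^ 2 + 4 * θ ^ 3 + 3 * θ ^ 4) := by
      linear_combination (-4 - 3 * θ - 8 * θ ^ 2 - 13 * θ ^ 3 - 16 * θ ^ 4
        - 22 * θ ^ 5 - 14 * θ ^ 6 - 14 * θ ^ 7 - 4 * θ ^ 8 - 3 * θ ^ 9) * hθ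
    rw [this] at hp5
    have hu : (-3 - 6 * θ - θ ^ 2 + 4 * θ ^ 3 + 3 * θ ^ 4) *
        (1 + 4 * θ + θ ^ 2 + 2 * θ ^ 3 + 2 * θ ^ 4) = 1 := by
      linear_combination (2 + 9 * θ + 14 * θ ^ 2 + 6 * θ ^ 3) * hθ
    rcases h.dvd_or_dvd hp5 with h' | h'
    · exact (h.associated_of_dvd hπ (h.dvd_of_dvd_pow h')).symm.dvd
    · exact absurd (isUnit_of_dvd_one (h'.trans (Dvd.intro _ hu))) h.not_isUnit
  obtain ⟨n, hn, hn'⟩ := (FiniteMultiplicity.of_prime_left hπ hm).exists_eq_pow_mul_and_not_dvd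
  generalize multiplicity (1 + θ ^ 2) m = k at hn
  have hn0 : n ≠ 0 := by rintro rfl; simp at hn'
  have hcop : IsCoprime n ((1 + θ ^ 2) ^ k * q) := by
    refine isCoprime_of_prime_dvd (fun h => hn0 h.1) fun p hpr hpn hpq => ?_
    rcases hpr.dvd_or_dvd hpq with h | h
    · exact hn' ((hpr.associated_of_dvd hπ (hpr.dvd_of_dvd_pow h)).symm.dvd.trans hpn)
    · exact hn' ((h5 p hpr (hp p hpr (hn ▸ hpn.mul_left _) h)).trans hpn)
  obtain ⟨d, ε, hε⟩ := exists_associated_pow_of_mul_eq_pow' hcop (c := w) (k := 2) (by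
    rw [← e, hn]; ring)
  have hd : (d : K) ≠ 0 := by
    rw [RingOfIntegers.coe_ne_zero_iff]
    rintro rfl
    simp [eq_comm, hn0] at hε
  have hg := (isGenerated_unit hK hθ ε).mul ⟨0, 0, 0, k, d, hd, rfl⟩
  convert hg using 1
  rw [hn, ← hε]
  push_cast
  ring

theorem isGenerated_of_sq_eq (hK : finrank ℚ K = 5) {θ : 𝓞 K} (hθ : θ ^ 5 = 2)
    {a d : 𝓞 K} (hd : IsUnit d) {x y : K} (hx : x ≠ 0)
    (e : y ^ 2 = x * (x ^ 2 + a * x + 5 * d ^ 2)) : IsGenerated (θ : K) x := by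
  have := isPrincipalIdealRing_of_pow_five_eq_two hK hθ
  obtain ⟨m, ⟨n, hn⟩, hmn, rfl⟩ := IsFractionRing.exists_reduced_fraction (A := 𝓞 K) x
  have hn0 : n ≠ 0 := nonZeroDivisors.ne_zero hn
  have hnK : (n : K) ≠ 0 := by exact_mod_cast hn0
  rw [IsFractionRing.mk'_eq_div] at *
  change (m / n : K) ≠ 0 at hx
  change y ^ 2 = (m / n : K) * ((m / n : K) ^ 2 + a * (m / n : K) + 5 * d ^ 2) at e
  change IsGenerated (θ : K) (m / n : K)
  have hm0 : m ≠ 0 := by rintro rfl; simp at hx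
  have e' : (y * n ^ 2) ^ 2 = ((m * n * (m ^ 2 + a * (m * n) + 5 * d ^ 2 * n ^ 2) : 𝓞 K) : K) := by
    rw [mul_pow, e]
    push_cast
    rw [show Algebra.cast (5 : 𝓞 K) = (5 : K) from map_ofNat (algebraMap (𝓞 K) K) 5]
    field_simp
  obtain ⟨w, hw⟩ := IsIntegrallyClosed.exists_algebraMap_eq_of_isIntegral_pow (R := 𝓞 K)
    (x := y * n ^ 2) two_pos (by rw [e']; exact isIntegral_algebraMap)
  rw [← hw] at e'
  have hg := isGenerated_of_mul_eq_sq hK hθ (mul_ne_zero hm0 hn0)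
    (q := m ^ 2 + a * (m * n) + 5 * d ^ 2 * n ^ 2) (w := w) (by exact_mod_cast e'.symm) (by
      intro p hp hpm hpq
      have hpm' : p ∣ m ^ 2 + 5 * d ^ 2 * n ^ 2 := by
        convert hpq.sub (hpm.mul_left a) using 1; ring
      rcases hp.dvd_or_dvd hpm with h | h
      · rcases hp.dvd_or_dvd ((dvd_add_right (h.pow two_ne_zero)).mp hpm') with h' | h'
        · rcases hp.dvd_or_dvd h' with h' | h'
          · exact h'
          · exact absurd (isUnit_of_dvd_unit (hp.dvd_of_dvd_pow h') hd) hp.not_isUnit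
        · exact absurd (hmn h (hp.dvd_of_dvd_pow h')) hp.not_isUnit
      · exact absurd (hmn (hp.dvd_of_dvd_pow
          ((dvd_add_left ((h.pow two_ne_zero).mul_left _)).mp hpm')) h) hp.not_isUnit)
  convert hg.mul ⟨0, 0, 0, 0, (n : K)⁻¹, inv_ne_zero hnK, rfl⟩ using 1
  push_cast
  field_simp

theorem not_isSquare_of_sq_eq (hK : finrank ℚ K = 5) {θ : 𝓞 K} (hθ : θ ^ 5 = 2) {x y : K}
    (hx : x ≠ 0) (e : y ^ 2 = x * (x ^ 2 - 5 * (θ - 1) * x + 5 * (θ - 1) ^ 2)) :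
    ¬ IsSquare (-(θ ^ 3 + θ ^ 2 - 1) * x : K) := by
  have hpos : 0 < InfinitePlace.nrRealPlaces K := by rw [nrRealPlaces_eq_one hK hθ]; exact one_pos
  classical
  obtain ⟨w, hw⟩ := Fintype.card_pos_iff.mp hpos
  let φ : K →+* ℝ := InfinitePlace.embedding_of_isReal hw
  have ht : φ θ ^ 5 = 2 := by
    have h5 : (θ : K) ^ 5 = 2 := by
      simpa using (congrArg (algebraMap (𝓞 K) K) hθ).trans (map_ofNat (algebraMap (𝓞 K) K) 2)
    rw [← map_pow, h5, map_ofNat]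
  have ht1 : 1 < φ θ := by
    by_contra! hle
    rcases le_or_gt 0 (φ θ) with h0 | h0
    · linarith [pow_le_one₀ (n := 5) h0 hle]
    · linarith [Odd.pow_neg (n := 5) (by decide) h0]
  have e' := congrArg φ e
  simp only [map_pow, map_mul, map_sub, map_add, map_ofNat, map_one] at e'
  have hx0 : 0 < φ x := by
    refine lt_of_le_of_ne ?_ ((map_ne_zero φ).mpr hx).symm
    by_contra! hlt
    have : 0 < φ x ^ 2 - 5 * (φ θ - 1) * φ x + 5 * (φ θ - 1) ^ 2 := by nlinarith
    nlinarith [sq_nonneg (φ y)]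
  rintro ⟨s, hs⟩
  have hs' := congrArg φ hs
  simp only [map_pow, map_mul, map_sub, map_add, map_neg, map_one] at hs'
  have : 0 < (φ θ ^ 3 + φ θ ^ 2 - 1) * φ x := by
    have := one_lt_pow₀ ht1 (n := 2) (by norm_num)
    have : 0 < φ θ ^ 3 + φ θ ^ 2 - 1 := by linarith [pow_pos (one_pos.trans ht1) 3]
    positivity
  nlinarith [mul_self_nonneg (φ s)]

theorem no_point (hK : finrank ℚ K = 5) {θ : 𝓞 K} (hθ : θ ^ 5 = 2) {R : Subring K} {τ : R}
    (hτ : (τ : K) = θ) (h : IsTwoAdic R τ) (j : ℕ) {x y : K} {c : R}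
    (e : y ^ 2 = x * (x ^ 2 - 5 * (τ - 1) * x + 5 * (τ - 1) ^ 2)) :
    x * τ ^ (10 * j + 12) ≠ 1 + τ ^ 11 * c := by
  have hd : IsUnit (θ - 1) := .of_mul_eq_one (1 + θ + θ ^ 2 + θ ^ 3 + θ ^ 4)
    (by linear_combination hθ)
  refine h.no_point (fun x y hx e => ?_) (fun x y hx e => ?_) j e
  · have hg : IsGenerated (τ : K) x := by
      rw [hτ] at e ⊢
      refine isGenerated_of_sq_eq hK hθ (a := -5 * (θ - 1)) hd hx (y := y) ?_
      push_cast
      rw [show Algebra.cast (5 : 𝓞 K) = (5 : K) from map_ofNat (algebraMap (𝓞 K) K) 5]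
      linear_combination e
    refine ⟨h.isTame_of_isGenerated hg, h.isTame_of_isGenerated ?_, ?_⟩
    · convert IsGenerated.mul (x := -(τ ^ 3 + τ ^ 2 - 1 : K))
        ⟨1, 0, 1, 0, 1, one_ne_zero, by ring⟩ hg using 1
    · rw [hτ] at e ⊢
      exact not_isSquare_of_sq_eq hK hθ hx e
  · refine h.isTame_of_isGenerated ?_
    rw [hτ] at e ⊢
    refine isGenerated_of_sq_eq hK hθ (a := 10 * (θ - 1)) hd hx (y := y) ?_
    push_cast
    rw [show Algebra.cast (10 : 𝓞 K) = (10 : K) from map_ofNat (algebraMap (𝓞 K) K) 10]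
    linear_combination e

theorem no_near_point (hK : finrank ℚ K = 5) {θ : 𝓞 K} (hθ : θ ^ 5 = 2) {R : Subring K} {τ : R}
    (hτ : (τ : K) = θ) (h : IsTwoAdic R τ) {t₀ V₀ v : R} {t V : K}
    (e₀ : (V₀ ^ 2 : K) = (τ - 1) * (t₀ ^ 4 + t₀ ^ 3 + t₀ ^ 2 + t₀ + 1))
    (hv : (V₀ ^ 2 : K) = 1 + τ ^ 11 * v)
    (e : V ^ 2 = (τ - 1) * (t ^ 4 + t ^ 3 + t ^ 2 + t + 1)) {g k : ℤ} (hk : Odd k) (hg : 8 ∣ g)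
    (ht : (t - t₀) * k = τ * g) : g = 0 := by
  by_contra hg0
  obtain ⟨n, o, ho, rfl⟩ : ∃ n : ℕ, ∃ o : ℤ, Odd o ∧ g = 2 ^ (n + 3) * o := by
    obtain ⟨r, rfl⟩ := hg
    obtain ⟨o, ho, ho'⟩ := (Int.finiteMultiplicity_iff.mpr
      ⟨by decide, right_ne_zero_of_mul hg0⟩ : FiniteMultiplicity 2 r).exists_eq_pow_mul_and_not_dvd
    refine ⟨multiplicity 2 r, o, by rwa [← Int.not_even_iff_odd, even_iff_two_dvd], ?_⟩
    nth_rw 1 [ho]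
    ring
  obtain ⟨w, w', hw, hw'⟩ := h.exists_sq_eq_of_odd ho hk
  have hk0 : (k : K) ≠ 0 := by
    rw [Int.cast_ne_zero]
    rintro rfl
    exact absurd hk (by decide)
  have ht' : t = t₀ + τ ^ (5 * n + 16) * w := by
    refine mul_right_cancel₀ hk0 ?_
    push_cast at ht
    rw [← h.pow_five'] at ht
    linear_combination ht - τ ^ (5 * n + 16) * hw
  obtain ⟨x, y, c, hy, hx⟩ := h.exists_point n (d := τ - 1) (V := V) (by push_cast; exact e₀) hv hw'
    ht' (by push_cast; exact e)
  push_cast at hy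
  exact no_point hK hθ hτ h (n + 1) hy hx

theorem isGenerated_sub (hK : finrank ℚ K = 5) {θ : 𝓞 K} (hθ : θ ^ 5 = 2) {a b c : ℤ}
    (hbc : IsCoprime b c) (hc : Odd c) (e : 2 * b ^ 5 - c ^ 5 = a ^ 2) :
    IsGenerated (θ : K) (θ * b - c : K) := by
  have e' : (2 * b ^ 5 - c ^ 5 : 𝓞 K) = a ^ 2 := by exact_mod_cast congrArg (Int.cast (R := 𝓞 K)) e
  have ha : (a : 𝓞 K) ≠ 0 := by
    rw [Int.cast_ne_zero]
    rintro rfl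
    have : Odd (2 * b ^ 5 - c ^ 5) := (even_two_mul _).sub_odd hc.pow
    rw [e] at this
    exact absurd this (by decide)
  have e1 : (θ * b - c : 𝓞 K) * (θ ^ 4 * b ^ 4 + θ ^ 3 * b ^ 3 * c + θ ^ 2 * b ^ 2 * c ^ 2
      + θ * b * c ^ 3 + c ^ 4) = a ^ 2 := by
    linear_combination e' + (b : 𝓞 K) ^ 5 * hθ
  have := isGenerated_of_mul_eq_sq hK hθ (m := θ * b - c) (by
    intro h0
    rw [h0, zero_mul] at e1
    exact pow_ne_zero 2 ha e1.symm) e1 (by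
    intro p hp hpm hpq
    have h1 : p ∣ 5 * (c : 𝓞 K) ^ 4 := by
      convert hpq.sub (hpm.mul_right (θ ^ 3 * b ^ 3 + 2 * θ ^ 2 * b ^ 2 * c + 3 * θ * b * c ^ 2
        + 4 * c ^ 3)) using 1
      ring
    rcases hp.dvd_or_dvd h1 with h | h
    · exact h
    have hpc := hp.dvd_of_dvd_pow h
    have hpb : p ∣ θ * b := by simpa using hpm.add hpc
    rcases hp.dvd_or_dvd hpb with h' | h'
    · obtain ⟨k, rfl⟩ := hc
      have h2 : p ∣ 2 := hθ ▸ h'.trans (dvd_pow_self θ (by norm_num))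
      push_cast at hpc
      exact absurd (isUnit_of_dvd_one ((dvd_add_right (h2.mul_right _)).mp hpc)) hp.not_isUnit
    · exact absurd ((hbc.map (Int.castRingHom (𝓞 K))).isUnit_of_dvd' h' hpc) hp.not_isUnit)
  push_cast at this
  simpa using this

theorem eq_one_of_two_mul_pow_five_sub (hK : finrank ℚ K = 5) {θ : 𝓞 K} (hθ : θ ^ 5 = 2)
    {a b c : ℤ} (hbc : IsCoprime b c) (hb : Odd b) (hc : Odd c)
    (e : 2 * b ^ 5 - c ^ 5 = a ^ 2) : b = 1 ∧ c = 1 := by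
  obtain ⟨R, τ, hτ, h⟩ := exists_isTwoAdic hK hθ
  have hg : IsGenerated (τ : K) ((τ - 1) * (τ * b - c)) := by
    refine .mul ⟨0, 1, 0, 0, 1, one_ne_zero, by ring⟩ ?_
    rw [hτ]
    exact isGenerated_sub hK hθ hbc hc e
  have htame := h.isTame_of_isGenerated hg
  have ha : Odd a := by
    have : Odd (2 * b ^ 5 - c ^ 5) := (even_two_mul _).sub_odd hc.pow
    rwa [e, Int.odd_pow' two_ne_zero] at this
  have h8 : (2 * b - c) % 8 = 1 := by
    have h1 := Int.eight_dvd_sq_sub_one_of_odd ha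
    have h2 := Int.eight_dvd_sq_sub_one_of_odd hb
    have h3 := Int.eight_dvd_sq_sub_one_of_odd hc
    have h4 {x : ℤ} (hx : 8 ∣ x ^ 2 - 1) : x ^ 5 ≡ x [ZMOD 8] := by
      have : x ^ 2 ≡ 1 [ZMOD 8] := (Int.modEq_iff_dvd.mpr hx).symm
      calc x ^ 5 = (x ^ 2) ^ 2 * x := by ring
        _ ≡ 1 ^ 2 * x [ZMOD 8] := (this.pow 2).mul_right x
        _ = x := by ring
    rw [← e] at h1
    have := (h4 h2).mul_left 2 |>.sub (h4 h3)
    rw [Int.ModEq] at this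
    lia
  have hmod : (b % 4 = 3 ∧ c % 8 = 5) ∨ (b % 4 = 1 ∧ c % 8 = 1) := by
    obtain ⟨r, rfl⟩ := hb
    lia
  rcases hmod with ⟨hb', hc'⟩ | ⟨hb', hc'⟩
  · obtain ⟨k, rfl⟩ : ∃ k, c = 5 + 8 * k := ⟨c / 8, by lia⟩
    obtain ⟨l, rfl⟩ : ∃ l, b = 3 + 4 * l := ⟨b / 4, by lia⟩
    refine absurd ?_ (h.not_isTame htame)
    simpa using h.hasDefect_seven (k : R) (l : R)
  obtain ⟨s, hs⟩ : IsSquare ((τ - 1) * (τ * b - c) : K) := by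
    refine h.isSquare_of_isTame htame ?_
    obtain ⟨k, rfl⟩ : ∃ k, c = 1 + 8 * k := ⟨c / 8, by lia⟩
    obtain ⟨l, rfl⟩ : ∃ l, b = 1 + 4 * l := ⟨b / 4, by lia⟩
    simpa using h.isLocalSquare_sub_one_mul (k : R) (l : R)
  have hc0 : (c : K) ≠ 0 := by
    rw [Int.cast_ne_zero]
    rintro rfl
    exact absurd hc (by decide)
  have h5 := h.pow_five'
  have hd := h.sub_one_ne_zero
  have e' : (2 * b ^ 5 - c ^ 5 : K) = a ^ 2 := by exact_mod_cast congrArg (Int.cast (R := K)) e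
  have hs0 : s ≠ 0 := by
    rintro rfl
    have h0 : (τ * b - c : K) = 0 := by simpa [hd] using hs
    have : (a : K) ^ 2 = 0 := by
      linear_combination -e' - (b : K) ^ 5 * h5 + (τ ^ 4 * b ^ 4 + τ ^ 3 * b ^ 3 * c
        + τ ^ 2 * b ^ 2 * c ^ 2 + τ * b * c ^ 3 + c ^ 4 : K) * h0
    rw [pow_eq_zero_iff two_ne_zero, Int.cast_eq_zero] at this
    exact absurd ha (by rw [this]; decide)
  obtain ⟨V, hV⟩ : ∃ V : K, V ^ 2 = (τ - 1) * ((τ * b / c) ^ 4 + (τ * b / c) ^ 3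
      + (τ * b / c) ^ 2 + τ * b / c + 1) := by
    refine ⟨a * (τ - 1) / (s * c ^ 2), ?_⟩
    rw [div_pow, div_eq_iff (by positivity), mul_pow, mul_pow, sq s, ← hs, ← e']
    field_simp
    linear_combination -(b : K) ^ 5 * h5
  rcases (by lia : b % 8 = 1 ∨ b % 8 = 5) with hb8 | hb8
  · have := no_near_point hK hθ hτ h (t₀ := τ) (V₀ := 1) (v := 0)
      (by push_cast; linear_combination -h5) (by simp) hV (g := b - c) hc (by lia)
      (by push_cast; field_simp)
    obtain rfl : b = c := by lia
    rcases Int.isUnit_iff.mp (isCoprime_self.mp hbc) with rfl | rfl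
    · exact ⟨rfl, rfl⟩
    · lia
  · obtain ⟨i, hi⟩ : ∃ i : R, (3 * i : K) = 1 := by
      obtain ⟨z, hz⟩ := h.exists_inv_one_add 4 1
      norm_num [h5] at hz
      exact ⟨1 + 2 * z, by push_cast; linear_combination hz⟩
    have := no_near_point hK hθ hτ h (t₀ := -τ * i)
      (V₀ := (1 + 2 * τ + 4 * τ ^ 2 - 6 * τ ^ 3 + 2 * τ ^ 4) * i ^ 2)
      (v := (27 - 9 * τ + 3 * τ ^ 2 - τ ^ 3 - 20 * τ ^ 4) * i ^ 4)
      (by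
        push_cast
        linear_combination (i : K) ^ 4 * (-41 + 52 * τ - 24 * τ ^ 2 + 4 * τ ^ 3) * h5 +
          (τ - 1 : K) * ((3 * i + 1) * (9 * i ^ 2 + 1) - τ * i * (9 * i ^ 2 + 3 * i + 1)
            + τ ^ 2 * i ^ 2 * (3 * i + 1) - τ ^ 3 * i ^ 3) * hi)
      (by
        push_cast
        linear_combination (i : K) ^ 4 * (40 - 2 * τ - 6 * τ ^ 2 - 2 * τ ^ 3 + 2 * τ ^ 4
          + 40 * τ ^ 5 - 27 * τ ^ 6 + 9 * τ ^ 7 - 3 * τ ^ 8 + τ ^ 9 + 20 * τ ^ 10) * h5 +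
          (3 * i + 1 : K) * (9 * i ^ 2 + 1) * hi) hV (g := 3 * b + c) (k := 3 * c)
      ((by decide : Odd (3 : ℤ)).mul hc) (by lia) (by
        push_cast
        field_simp
        linear_combination (c * τ : K) * hi)
    obtain rfl : c = -3 * b := by lia
    have hbu : IsUnit b := hbc.isUnit_of_dvd' dvd_rfl (dvd_mul_left b _)
    rcases Int.isUnit_iff.mp hbu with rfl | rfl <;> lia

end NumberField

/-- If `b, c` are coprime odd integers and `a` is an integer with `2b⁵ - c⁵ = a²`,
then `b = c = 1` (and hence `a = ±1`). -/
theorem two_b5_sub_c5_sq (a b c : ℤ) (hgcd : Int.gcd b c = 1)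
    (hb : Odd b) (hc : Odd c) (heq : 2 * b ^ 5 - c ^ 5 = a ^ 2) :
    b = 1 ∧ c = 1 ∧ (a = 1 ∨ a = -1) := by
  have hirr : Irreducible (X ^ 5 - C 2 : ℚ[X]) :=
    X_pow_sub_C_irreducible_of_prime Nat.prime_five fun q hq =>
      rat_pow_five_ne (n := 2) (k := 1) (by norm_num) (by norm_num) q (by exact_mod_cast hq)
  have : Fact (Irreducible (X ^ 5 - C 2 : ℚ[X])) := ⟨hirr⟩
  let pb := AdjoinRoot.powerBasis hirr.ne_zero
  have : FiniteDimensional ℚ (AdjoinRoot (X ^ 5 - C 2 : ℚ[X])) := pb.finite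
  have : CharZero (AdjoinRoot (X ^ 5 - C 2 : ℚ[X])) := algebraRat.charZero _
  have : NumberField (AdjoinRoot (X ^ 5 - C 2 : ℚ[X])) := {}
  have hroot : (AdjoinRoot.root (X ^ 5 - C 2 : ℚ[X])) ^ 5 = 2 := by
    have := AdjoinRoot.eval₂_root (X ^ 5 - C 2 : ℚ[X])
    simpa [sub_eq_zero] using this
  have hroot_integral : IsIntegral ℤ (AdjoinRoot.root (X ^ 5 - C 2 : ℚ[X])) :=
    .of_pow (n := 5) (by norm_num) (by rw [hroot]; exact isIntegral_algebraMap (x := (2 : ℤ)))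
  have hθ : (⟨_, hroot_integral⟩ : 𝓞 (AdjoinRoot (X ^ 5 - C 2 : ℚ[X]))) ^ 5 = 2 := Subtype.ext hroot
  obtain ⟨rfl, rfl⟩ := eq_one_of_two_mul_pow_five_sub
    (by rw [pb.finrank, AdjoinRoot.powerBasis_dim, natDegree_X_pow_sub_C]) hθ
    (Int.isCoprime_iff_gcd_eq_one.mpr hgcd) hb hc heq
  exact ⟨rfl, rfl, sq_eq_one_iff.mp (by lia)⟩
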